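/- arXiv:1602.04884 — 2 statements merged into one kernel-verified Lean document; each statement's English description precedes it below -/
import Mathlib

section
/- Let 1 ≤ p < ∞, 0 < r < ∞, 0 < q < ∞ and set 1/s := (1/r − 1/p)₊. Let u, v, w ∈ 𝔐⁺ be weights with 0 < ∫ₜ^∞ u < ∞ for all t > 0, and let k satisfy Oinarov's condition with constant D. Define (𝒮f)(x) := (∫₀ˣ w(y)(∫₀ʸ k(y,z)f(z)dz)^q dy)^{1/q}, and for 0 ≤ c < d < ∞ the operators (ℋ*_{c,d}f)(x) := χ_{(c,d]}(x)∫_{ζ^{-1}(c)}^x k(x,z)f(z)dz and (ℋ*_d f)(x) := χ_{(0,d]}(x)∫₀ˣ k(x,z)f(z)dz. Then the least constant C_𝒮 such that ‖𝒮f‖_{L^r_u} ≤ C_𝒮‖f‖_{L^p_v} for all f ∈ 𝔐⁺ is finite if and only if 𝐀₀ + 𝐀₁ + 𝐀₂ < ∞, where 𝐀₀ and 𝐀₁ are the least constants in (∫₀^∞ u(x)(∫_{ζ^{-2}(x)}^x w)^{r/q}(∫₀^{ζ^{-2}(x)} k(ζ^{-2}(x),z)f(z)dz)^r dx)^{1/r}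 ≤ 𝐀₀‖f‖_{L^p_v} and (∫₀^∞ u(x)(∫_{ζ^{-2}(x)}^x w(y)k(y,ζ^{-2}(x))^q dy)^{r/q}(∫₀^{ζ^{-2}(x)} f)^r dx)^{1/r} ≤ 𝐀₁‖f‖_{L^p_v} over all f ∈ 𝔐⁺, and 𝐀₂ := sup_{t>0}(∫ₜ^∞ u)^{1/r}‖ℋ*_t‖_{L^p_v→L^q_w} if p ≤ r, while 𝐀₂ := (∫₀^∞ u(x)(∫ₓ^∞ u)^{s/p}‖ℋ*_{ζ^{-1}(x),ζ(x)}‖^s_{L^p_v→L^q_w} dx)^{1/s} if r < p. Moreover C_𝒮 ≈ 𝐀₀ + 𝐀₁ + 𝐀₂, with equivalence constants depending only on p, q, r and D. -/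
/-!
Up to the factor `D`, Oinarov's condition bounds the operators defining `𝐀₀` and `𝐀₁` pointwise
by `𝒮f`, which gives `𝐀₀, 𝐀₁ ≤ D C_𝒮`. Since `𝒮f` is increasing and `‖ℋ*_t f‖_{L^q_w} = 𝒮f(t)`,
also `𝐀₂ ≤ C_𝒮` when `p ≤ r`. When `r < p`, cut `(0,∞)` at the points where `∫ₜ^∞ u` passes the
powers of `2`, take near-extremal functions for `ℋ*` at these points, and test the inequality on
their weighted `ℓ^p` superpositions: these dominate each term and have explicit norm, so the
bound for `𝐀₂` follows by duality in `ℓ^{p/r}`.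

For the upper bound, `∫_y^∞ u` at least doubles when `y` moves from `x` to `ζ⁻¹(x) > 0`. Hence
for an increasing `F` the integral of `F ∘ ζ⁻¹` against `u` is at most half that of `F`, and in
`∫₀^∞ u (𝒮f)^r` the part of `𝒮f(x)` coming from `(0, ζ⁻¹(x))` is absorbed into the left-hand
side. For `y` in the remaining block `(ζ⁻¹(x), x)`, splitting `∫₀ʸ k(y,z) f(z) dz` at `ζ⁻²(x)`
by Oinarov's condition yields the operators of `𝐀₀` and `𝐀₁` and a local term, at most
`‖ℋ*_{ζ⁻¹(x),ζ(x)}‖ ‖f χ_{(ζ⁻²(x),x)}‖_{L^p_v}`. Because `∫_z^∞ u ≤ 4 ∫ₓ^∞ u` for `z > ζ⁻²(x)`,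
Fubini's theorem gives `∫₀^∞ u(x) (∫ₓ^∞ u)⁻¹ ‖f χ_{(ζ⁻²(x),x)}‖^p dx ≤ 4 ‖f‖^p`; combined with
Hölder's inequality if `r < p`, and with the definition of `𝐀₂` directly if `p ≤ r`, this bounds
the local term.
-/

open MeasureTheory Set ENNReal

noncomputable section

/-- `∫₀ᵃ f` (Lebesgue integral over `(0,a)`). -/
def intTo (a : ℝ) (f : ℝ → ℝ≥0∞) : ℝ≥0∞ := ∫⁻ t in Ioo (0:ℝ) a, f t

/-- `∫ₐ^∞ f`. -/
def intFrom (a : ℝ) (f : ℝ → ℝ≥0∞) : ℝ≥0∞ := ∫⁻ t in Ioi a, f t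

/-- `∫_c^d f`. -/
def intIoo (c d : ℝ) (f : ℝ → ℝ≥0∞) : ℝ≥0∞ := ∫⁻ t in Ioo c d, f t

/-- `∫_c^d f` with a possibly infinite upper endpoint `d`. -/
def intIooE (c : ℝ) (d : ℝ≥0∞) (f : ℝ → ℝ≥0∞) : ℝ≥0∞ :=
  ∫⁻ t in {z : ℝ | c < z ∧ ENNReal.ofReal z < d}, f t

/-- `∫_d^∞ f` with a possibly infinite lower endpoint `d`. -/
def intFromE (d : ℝ≥0∞) (f : ℝ → ℝ≥0∞) : ℝ≥0∞ :=
  ∫⁻ t in {z : ℝ | d < ENNReal.ofReal z}, f t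

/-- Weighted `L^p` quasinorm on `(0,∞)`, for `0 < p < ∞`. -/
def lpN (p : ℝ) (v f : ℝ → ℝ≥0∞) : ℝ≥0∞ :=
  (∫⁻ x in Ioi (0:ℝ), f x ^ p * v x) ^ (1/p)

/-- Weighted `L^∞` norm on `(0,∞)`. -/
def linfN (v f : ℝ → ℝ≥0∞) : ℝ≥0∞ :=
  essSup (fun x => v x * f x) (volume.restrict (Ioi (0:ℝ)))

/-- Weighted `L^p` (quasi)norm with exponent `p ∈ (0,∞]`. -/
def lgenN (p : ℝ≥0∞) (v f : ℝ → ℝ≥0∞) : ℝ≥0∞ :=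
  if p = ∞ then linfN v f else lpN p.toReal v f

/-- Least constant `C` such that `Φ f ≤ C * Ψ f` for every measurable `f`. -/
def leastC (Φ Ψ : (ℝ → ℝ≥0∞) → ℝ≥0∞) : ℝ≥0∞ :=
  sInf {C : ℝ≥0∞ | ∀ f : ℝ → ℝ≥0∞, Measurable f → Φ f ≤ C * Ψ f}

/-- Oinarov's condition with constant `D`. -/
def Oinarov (k : ℝ → ℝ → ℝ≥0∞) (D : ℝ≥0∞) : Prop :=
  (∀ x y : ℝ, x < y → k x y = 0) ∧
    ∀ x z y : ℝ, 0 ≤ y → y ≤ z → z ≤ x →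
      D⁻¹ * (k x z + k z y) ≤ k x y ∧ k x y ≤ D * (k x z + k z y)

/-- `σ(x) = inf {y > 0 : ∫₀ʸ u ≥ 2∫₀ˣ u}`, with `inf ∅ = ∞`. -/
def sigmaF (u : ℝ → ℝ≥0∞) (x : ℝ) : ℝ≥0∞ :=
  sInf (ENNReal.ofReal '' {y : ℝ | 0 < y ∧ 2 * intTo x u ≤ intTo y u})

/-- `σ⁻¹(x) = inf {y > 0 : ∫₀ʸ u ≥ ½∫₀ˣ u}`. -/
def sigmaInv (u : ℝ → ℝ≥0∞) (x : ℝ) : ℝ :=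
  sInf {y : ℝ | 0 < y ∧ intTo x u / 2 ≤ intTo y u}

/-- The extension of `σ` to a possibly infinite argument. -/
def sigmaE (u : ℝ → ℝ≥0∞) (d : ℝ≥0∞) : ℝ≥0∞ :=
  if d = ∞ then ∞ else sigmaF u d.toReal

/-- `σ² = σ ∘ σ`. -/
def sigma2 (u : ℝ → ℝ≥0∞) (x : ℝ) : ℝ≥0∞ := sigmaE u (sigmaF u x)

/-- `σ³ = σ ∘ σ ∘ σ`. -/
def sigma3 (u : ℝ → ℝ≥0∞) (x : ℝ) : ℝ≥0∞ := sigmaE u (sigma2 u x)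

/-- `ζ(x) = sup {y > 0 : ∫_y^∞ u ≥ ½∫ₓ^∞ u}`, with `sup ∅ = 0`. -/
def zt (u : ℝ → ℝ≥0∞) (x : ℝ) : ℝ :=
  sSup {y : ℝ | 0 < y ∧ intFrom x u / 2 ≤ intFrom y u}

/-- `ζ⁻¹(x) = sup {y > 0 : ∫_y^∞ u ≥ 2∫ₓ^∞ u}`, with `sup ∅ = 0`. -/
def ztInv (u : ℝ → ℝ≥0∞) (x : ℝ) : ℝ :=
  sSup {y : ℝ | 0 < y ∧ 2 * intFrom x u ≤ intFrom y u}

/-- The operator `𝒮` (case `q < ∞`):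
`(𝒮f)(x) = (∫₀ˣ w(y) (∫₀ʸ k(y,z) f(z) dz)^q dy)^{1/q}`. -/
def opSc (q : ℝ) (w : ℝ → ℝ≥0∞) (k : ℝ → ℝ → ℝ≥0∞) (f : ℝ → ℝ≥0∞) (x : ℝ) : ℝ≥0∞ :=
  (intTo x (fun y => w y * (intTo y (fun z => k y z * f z)) ^ q)) ^ (1/q)

def CSc (p r q : ℝ) (u v w : ℝ → ℝ≥0∞) (k : ℝ → ℝ → ℝ≥0∞) : ℝ≥0∞ :=
  leastC (fun f => lpN r u (opSc q w k f)) (lpN p v)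

/-- `ζ⁻²`. -/
def ztInv2 (u : ℝ → ℝ≥0∞) (x : ℝ) : ℝ := ztInv u (ztInv u x)

def bfA0 (p r q : ℝ) (u v w : ℝ → ℝ≥0∞) (k : ℝ → ℝ → ℝ≥0∞) : ℝ≥0∞ :=
  leastC (fun f => (∫⁻ x in Ioi (0:ℝ),
      u x * (intIoo (ztInv2 u x) x w) ^ (r/q) *
        (intTo (ztInv2 u x) (fun z => k (ztInv2 u x) z * f z)) ^ r) ^ (1/r)) (lpN p v)

def bfA1 (p r q : ℝ) (u v w : ℝ → ℝ≥0∞) (k : ℝ → ℝ → ℝ≥0∞) : ℝ≥0∞ :=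
  leastC (fun f => (∫⁻ x in Ioi (0:ℝ),
      u x * (intIoo (ztInv2 u x) x (fun y => w y * k y (ztInv2 u x) ^ q)) ^ (r/q) *
        (intTo (ztInv2 u x) f) ^ r) ^ (1/r)) (lpN p v)

/-- `(ℋ*_d f)(x) = χ_{(0,d]}(x) ∫₀ˣ k(x,z) f(z) dz`. -/
def calHsd (k : ℝ → ℝ → ℝ≥0∞) (d : ℝ) (f : ℝ → ℝ≥0∞) (x : ℝ) : ℝ≥0∞ :=
  if 0 < x ∧ x ≤ d then intTo x (fun z => k x z * f z) else 0

/-- `(ℋ*_{c,d} f)(x) = χ_{(c,d]}(x) ∫_{ζ⁻¹(c)}^x k(x,z) f(z) dz`. -/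
def calHscd (u : ℝ → ℝ≥0∞) (k : ℝ → ℝ → ℝ≥0∞) (c d : ℝ) (f : ℝ → ℝ≥0∞) (x : ℝ) : ℝ≥0∞ :=
  if c < x ∧ x ≤ d then intIoo (ztInv u c) x (fun z => k x z * f z) else 0

def bfA2 (p r q : ℝ) (u v w : ℝ → ℝ≥0∞) (k : ℝ → ℝ → ℝ≥0∞) : ℝ≥0∞ :=
  if p ≤ r then
    ⨆ (t : ℝ) (_ : 0 < t), (intFrom t u) ^ (1/r) *
      leastC (fun f => lpN q w (calHsd k t f)) (lpN p v)
  else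
    (∫⁻ x in Ioi (0:ℝ), u x * (intFrom x u) ^ ((1/r - 1/p)⁻¹ / p) *
        leastC (fun f => lpN q w (calHscd u k (ztInv u x) (zt u x) f)) (lpN p v)
          ^ (1/r - 1/p)⁻¹) ^ (1/r - 1/p)

section LeastConstant

variable {Φ Φ₁ Φ₂ Ψ : (ℝ → ℝ≥0∞) → ℝ≥0∞} {K : ℝ≥0∞}

theorem leastC_le_of_ne_top (h : ∀ f, Measurable f → Ψ f ≠ ∞ → Φ f ≤ K * Ψ f) :
    leastC Φ Ψ ≤ K := by
  refine le_of_forall_gt_imp_ge_of_dense fun b hb => sInf_le fun f hf => ?_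
  by_cases htop : Ψ f = ∞
  · simp [htop, ENNReal.mul_top (pos_of_gt hb).ne']
  · exact (h f hf htop).trans (by gcongr)

theorem le_leastC_mul (hfin : leastC Φ Ψ ≠ ∞) {f : ℝ → ℝ≥0∞} (hf : Measurable f)
    (htop : Ψ f ≠ ∞) : Φ f ≤ leastC Φ Ψ * Ψ f := by
  obtain ⟨C, hC, -⟩ := sInf_lt_iff.1 (lt_top_iff_ne_top.2 hfin)
  by_cases h0 : Ψ f = 0
  · simpa [h0] using hC f hf
  · rw [← ENNReal.div_le_iff h0 htop]
    exact le_sInf fun C hC => (ENNReal.div_le_iff h0 htop).2 (hC f hf)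

theorem leastC_le_mul_leastC (hK : K ≠ 0) (h : ∀ f, Measurable f → Φ₁ f ≤ K * Φ₂ f) :
    leastC Φ₁ Ψ ≤ K * leastC Φ₂ Ψ := by
  by_cases hfin : leastC Φ₂ Ψ = ∞
  · simp [hfin, ENNReal.mul_top hK]
  · refine leastC_le_of_ne_top fun f hf htop => (h f hf).trans ?_
    rw [mul_assoc]
    gcongr
    exact le_leastC_mul hfin hf htop

end LeastConstant

section TailIntegral

variable {u : ℝ → ℝ≥0∞}

theorem intFrom_antitone (u : ℝ → ℝ≥0∞) : Antitone fun t => intFrom t u :=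
  fun _ _ h => lintegral_mono_set (Ioi_subset_Ioi h)

theorem withDensity_Ioi_eq_intFrom (u : ℝ → ℝ≥0∞) (t : ℝ) :
    volume.withDensity u (Ioi t) = intFrom t u :=
  withDensity_apply _ measurableSet_Ioi

theorem withDensity_Ici_eq_intFrom (u : ℝ → ℝ≥0∞) (t : ℝ) :
    volume.withDensity u (Ici t) = intFrom t u := by
  rw [withDensity_apply _ measurableSet_Ici]
  exact setLIntegral_congr Ioi_ae_eq_Ici.symm

theorem intFrom_le_of_forall_gt {m : ℝ} {τ : ℝ≥0∞} (h : ∀ x, m < x → intFrom x u ≤ τ) :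
    intFrom m u ≤ τ := by
  obtain ⟨a, ha, hma, hlim⟩ := exists_seq_strictAnti_tendsto m
  have hunion : Ioi m = ⋃ n, Ioi (a n) := by
    ext x
    simp only [mem_Ioi, mem_iUnion]
    exact ⟨fun hx => (hlim.eventually (gt_mem_nhds hx)).exists, fun ⟨n, hn⟩ => (hma n).trans hn⟩
  rw [← withDensity_Ioi_eq_intFrom, hunion,
    Monotone.measure_iUnion fun i j hij => Ioi_subset_Ioi (ha.antitone hij)]
  exact iSup_le fun n => (withDensity_Ioi_eq_intFrom u _).trans_le (h _ (hma n))

theorem le_intFrom_of_forall_lt (hfin : ∀ t : ℝ, 0 < t → intFrom t u ≠ ∞) {m : ℝ} (hm : 0 < m)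
    {τ : ℝ≥0∞} (h : ∀ x, 0 < x → x < m → τ ≤ intFrom x u) : τ ≤ intFrom m u := by
  obtain ⟨a, ha, ham, hlim⟩ := exists_seq_strictMono_tendsto' hm
  have hinter : Ici m = ⋂ n, Ioi (a n) := by
    ext x
    simp only [mem_Ici, mem_iInter, mem_Ioi]
    exact ⟨fun hx n => (ham n).2.trans_le hx, fun hx => le_of_tendsto' hlim fun n => (hx n).le⟩
  rw [← withDensity_Ici_eq_intFrom, hinter,
    Antitone.measure_iInter (fun i j hij => Ioi_subset_Ioi (ha.monotone hij))
      (fun _ => measurableSet_Ioi.nullMeasurableSet)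
      ⟨0, (withDensity_Ioi_eq_intFrom u _).trans_ne (hfin _ (ham 0).1)⟩]
  exact le_iInf fun n => (h _ (ham n).1 (ham n).2).trans_eq (withDensity_Ioi_eq_intFrom u _).symm

theorem tendsto_intFrom_natCast (hfin : ∀ t : ℝ, 0 < t → intFrom t u ≠ ∞) :
    Filter.Tendsto (fun n : ℕ => intFrom n u) Filter.atTop (nhds 0) := by
  have hanti : Antitone fun n : ℕ => Ioi (n : ℝ) :=
    fun i j hij => Ioi_subset_Ioi (Nat.cast_le.2 hij)
  have hempty : ⋂ n : ℕ, Ioi (n : ℝ) = ∅ := by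
    refine eq_empty_of_forall_notMem fun x hx => ?_
    obtain ⟨n, hn⟩ := exists_nat_gt x
    exact lt_asymm hn (mem_iInter.1 hx n)
  have hlim := tendsto_measure_iInter_atTop (μ := volume.withDensity u)
    (fun n : ℕ => measurableSet_Ioi.nullMeasurableSet) hanti
    ⟨1, (withDensity_Ioi_eq_intFrom u _).trans_ne (hfin _ (by simp))⟩
  simpa only [hempty, measure_empty, Function.comp_def, withDensity_Ioi_eq_intFrom] using hlim

/-- The weights of the theorem, whose tails `∫ₜ^∞ u` are positive and finite for `t > 0`. The total
mass `∫₀^∞ u` may be infinite. -/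
def IsTailWeight (u : ℝ → ℝ≥0∞) : Prop :=
  ∀ t : ℝ, 0 < t → intFrom t u ≠ 0 ∧ intFrom t u ≠ ∞

theorem IsTailWeight.intFrom_ne_top (hU : IsTailWeight u) {t : ℝ} (ht : 0 < t) :
    intFrom t u ≠ ∞ :=
  (hU t ht).2

theorem IsTailWeight.intFrom_ne_zero (hU : IsTailWeight u) (t : ℝ) : intFrom t u ≠ 0 :=
  ne_bot_of_le_ne_bot (hU (max t 1) (by positivity)).1 (intFrom_antitone u (le_max_left t 1))

end TailIntegral

section TailQuantile

variable {u : ℝ → ℝ≥0∞} {τ τ' : ℝ≥0∞} {x z : ℝ}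

/-- The last point at which the tail integral of `u` is still at least `τ`: the generalized inverse
of `t ↦ ∫ₜ^∞ u` on `(0,∞)`, equal to `0` if there is no such point. By definition, `ζ(x)` and
`ζ⁻¹(x)` are its values at `½∫ₓ^∞ u` and `2∫ₓ^∞ u`. -/
def tailQuantile (u : ℝ → ℝ≥0∞) (τ : ℝ≥0∞) : ℝ :=
  sSup {y : ℝ | 0 < y ∧ τ ≤ intFrom y u}

theorem tailQuantile_nonneg (u : ℝ → ℝ≥0∞) (τ : ℝ≥0∞) : 0 ≤ tailQuantile u τ :=
  Real.sSup_nonneg fun _ hy => hy.1.le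

theorem bddAbove_le_intFrom (hfin : ∀ t : ℝ, 0 < t → intFrom t u ≠ ∞) (hτ : τ ≠ 0) :
    BddAbove {y : ℝ | 0 < y ∧ τ ≤ intFrom y u} := by
  obtain ⟨n, hn⟩ :=
    ((tendsto_intFrom_natCast hfin).eventually (gt_mem_nhds (pos_iff_ne_zero.2 hτ))).exists
  refine ⟨n, fun y hy => not_lt.1 fun hlt => ?_⟩
  exact (hy.2.trans (intFrom_antitone u hlt.le)).not_gt hn

theorem le_tailQuantile (hfin : ∀ t : ℝ, 0 < t → intFrom t u ≠ ∞) (hτ : τ ≠ 0) (hx : 0 < x)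
    (h : τ ≤ intFrom x u) : x ≤ tailQuantile u τ :=
  le_csSup (bddAbove_le_intFrom hfin hτ) ⟨hx, h⟩

theorem tailQuantile_le (hx : 0 ≤ x) (h : intFrom x u < τ) : tailQuantile u τ ≤ x :=
  Real.sSup_le (fun _ hy => not_lt.1 fun hlt =>
    (hy.2.trans (intFrom_antitone u hlt.le)).not_gt h) hx

theorem tailQuantile_le_tailQuantile (hfin : ∀ t : ℝ, 0 < t → intFrom t u ≠ ∞) (hτ : τ ≠ 0)
    (h : τ ≤ τ') : tailQuantile u τ' ≤ tailQuantile u τ :=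
  Real.sSup_le (fun _ hy => le_tailQuantile hfin hτ hy.1 (h.trans hy.2)) (tailQuantile_nonneg u τ)

theorem intFrom_lt_of_tailQuantile_lt (hfin : ∀ t : ℝ, 0 < t → intFrom t u ≠ ∞) (hτ : τ ≠ 0)
    (h : tailQuantile u τ < z) : intFrom z u < τ :=
  not_le.1 fun hle => (le_tailQuantile hfin hτ ((tailQuantile_nonneg u τ).trans_lt h) hle).not_gt h

theorem intFrom_tailQuantile_le (hfin : ∀ t : ℝ, 0 < t → intFrom t u ≠ ∞) (hτ : τ ≠ 0) :
    intFrom (tailQuantile u τ) u ≤ τ :=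
  intFrom_le_of_forall_gt fun _ hx => (intFrom_lt_of_tailQuantile_lt hfin hτ hx).le

theorem le_intFrom_tailQuantile (hfin : ∀ t : ℝ, 0 < t → intFrom t u ≠ ∞)
    (hpos : 0 < tailQuantile u τ) : τ ≤ intFrom (tailQuantile u τ) u := by
  refine le_intFrom_of_forall_lt hfin hpos fun x _ hx => ?_
  have hne : {y : ℝ | 0 < y ∧ τ ≤ intFrom y u}.Nonempty := by
    rw [nonempty_iff_ne_empty]
    intro hempty
    simp [tailQuantile, hempty] at hpos
  obtain ⟨y, hy, hxy⟩ := exists_lt_of_lt_csSup hne hx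
  exact hy.2.trans (intFrom_antitone u hxy.le)

end TailQuantile

section Zeta

variable {u : ℝ → ℝ≥0∞} {x z : ℝ}

theorem ztInv_nonneg (u : ℝ → ℝ≥0∞) (x : ℝ) : 0 ≤ ztInv u x := tailQuantile_nonneg _ _

theorem ztInv2_nonneg (u : ℝ → ℝ≥0∞) (x : ℝ) : 0 ≤ ztInv2 u x := ztInv_nonneg _ _

theorem IsTailWeight.ztInv_monotone (hU : IsTailWeight u) : Monotone (ztInv u) := fun x y hxy =>
  tailQuantile_le_tailQuantile (fun _ => hU.intFrom_ne_top)
    (mul_ne_zero two_ne_zero (hU.intFrom_ne_zero y)) (by gcongr; exact intFrom_antitone u hxy)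

theorem IsTailWeight.ztInv2_monotone (hU : IsTailWeight u) : Monotone (ztInv2 u) :=
  hU.ztInv_monotone.comp hU.ztInv_monotone

theorem IsTailWeight.ztInv_le (hU : IsTailWeight u) (hx : 0 ≤ x) : ztInv u x ≤ x := by
  by_cases htop : intFrom x u = ∞
  · refine Real.sSup_le (fun y hy => absurd ?_ (hU.intFrom_ne_top hy.1)) hx
    simpa [htop] using hy.2
  · refine tailQuantile_le hx ?_
    rw [two_mul]
    exact ENNReal.lt_add_right htop (hU.intFrom_ne_zero x)

theorem IsTailWeight.ztInv2_le_ztInv (hU : IsTailWeight u) (x : ℝ) : ztInv2 u x ≤ ztInv u x :=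
  hU.ztInv_le (ztInv_nonneg u x)

theorem IsTailWeight.le_zt (hU : IsTailWeight u) (hx : 0 < x) : x ≤ zt u x :=
  le_tailQuantile (fun _ => hU.intFrom_ne_top) (by simpa using hU.intFrom_ne_zero x) hx
    ENNReal.half_le_self

theorem IsTailWeight.intFrom_le_of_ztInv2_lt (hU : IsTailWeight u) (h : ztInv2 u x < z) :
    intFrom z u ≤ 4 * intFrom x u := by
  have hfin : ∀ t : ℝ, 0 < t → intFrom t u ≠ ∞ := fun _ => hU.intFrom_ne_top
  calc intFrom z u ≤ 2 * intFrom (ztInv u x) u :=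
        (intFrom_lt_of_tailQuantile_lt hfin (mul_ne_zero two_ne_zero (hU.intFrom_ne_zero _)) h).le
    _ ≤ 2 * (2 * intFrom x u) := by
        gcongr
        exact intFrom_tailQuantile_le hfin (mul_ne_zero two_ne_zero (hU.intFrom_ne_zero x))
    _ = 4 * intFrom x u := by rw [← mul_assoc]; norm_num

end Zeta

section Integrals

theorem intIoo_mono_endpoints (g : ℝ → ℝ≥0∞) {a b c d : ℝ} (hab : a ≤ b) (hcd : c ≤ d) :
    intIoo b c g ≤ intIoo a d g :=
  lintegral_mono_set (Ioo_subset_Ioo hab hcd)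

theorem intTo_monotone (g : ℝ → ℝ≥0∞) : Monotone fun x => intTo x g :=
  fun _ _ h => intIoo_mono_endpoints g le_rfl h

theorem intIoo_le_intTo (g : ℝ → ℝ≥0∞) {a : ℝ} (ha : 0 ≤ a) (x : ℝ) : intIoo a x g ≤ intTo x g :=
  intIoo_mono_endpoints g ha le_rfl

theorem intIoo_le_add (g : ℝ → ℝ≥0∞) (a c x : ℝ) :
    intIoo a x g ≤ intIoo a c g + intIoo c x g := by
  have hcover : Ioo a x ⊆ Ioc a c ∪ Ioo c x := fun y hy =>
    (le_or_gt y c).imp (fun h => ⟨hy.1, h⟩) fun h => ⟨h, hy.2⟩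
  calc intIoo a x g ≤ (∫⁻ y in Ioc a c, g y) + intIoo c x g :=
        (lintegral_mono_set hcover).trans (lintegral_union_le _ _ _)
    _ = intIoo a c g + intIoo c x g := by
        rw [← setLIntegral_congr Ioo_ae_eq_Ioc]
        rfl

theorem tendsto_intIoo_left (g : ℝ → ℝ≥0∞) (x : ℝ) {ε : ℕ → ℝ} (hε : ∀ n, 0 ≤ ε n)
    (hlim : Filter.Tendsto ε Filter.atTop (nhds 0)) (hg : Measurable g) :
    Filter.Tendsto (fun n => intIoo (ε n) x g) Filter.atTop (nhds (intTo x g)) := by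
  have hcover := aecover_Ioo_of_Ioo (μ := volume) hlim (tendsto_const_nhds (x := x))
  refine (hcover.lintegral_tendsto_of_countably_generated hg.aemeasurable).congr fun n => ?_
  rw [Measure.restrict_restrict measurableSet_Ioo,
    inter_eq_left.2 (Ioo_subset_Ioo_left (hε n))]
  rfl

theorem measurable_intIoo {X : Type*} [MeasurableSpace X] {c d : X → ℝ} {h : X → ℝ → ℝ≥0∞}
    (hc : Measurable c) (hd : Measurable d) (hh : Measurable (Function.uncurry h)) :
    Measurable fun x => intIoo (c x) (d x) (h x) := by
  have hS : MeasurableSet {p : X × ℝ | c p.1 < p.2 ∧ p.2 < d p.1} :=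
    (measurableSet_lt (hc.comp measurable_fst) measurable_snd).inter
      (measurableSet_lt measurable_snd (hd.comp measurable_fst))
  convert (hh.indicator hS).lintegral_prod_right' (ν := (volume : Measure ℝ)) using 2 with x
  unfold intIoo
  rw [← lintegral_indicator measurableSet_Ioo]
  rfl

end Integrals

section WeightedMeasure

variable {u : ℝ → ℝ≥0∞}

/-- The measure `u(x) dx` on `(0,∞)`. -/
def weightedMeasure (u : ℝ → ℝ≥0∞) : Measure ℝ := (volume.withDensity u).restrict (Ioi 0)

theorem lintegral_weightedMeasure (hu : Measurable u) {F : ℝ → ℝ≥0∞} (hF : Measurable F) :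
    ∫⁻ x, F x ∂weightedMeasure u = ∫⁻ x in Ioi 0, u x * F x :=
  setLIntegral_withDensity_eq_setLIntegral_mul _ hu hF measurableSet_Ioi

theorem ae_weightedMeasure_pos (u : ℝ → ℝ≥0∞) : ∀ᵐ x ∂weightedMeasure u, 0 < x :=
  ae_restrict_mem measurableSet_Ioi

theorem weightedMeasure_Ioi (u : ℝ → ℝ≥0∞) {t : ℝ} (ht : 0 ≤ t) :
    weightedMeasure u (Ioi t) = intFrom t u := by
  rw [weightedMeasure, Measure.restrict_apply measurableSet_Ioi,
    inter_eq_left.2 (Ioi_subset_Ioi ht), withDensity_Ioi_eq_intFrom]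

theorem weightedMeasure_le_of_intFrom_le {A : Set ℝ} (hA : A ⊆ Ioi 0) {τ : ℝ≥0∞}
    (h : ∀ x ∈ A, intFrom x u ≤ τ) : weightedMeasure u A ≤ τ := by
  rcases A.eq_empty_or_nonempty with rfl | hne
  · simp
  have hbdd : BddBelow A := ⟨0, fun _ hx => (hA hx).le⟩
  have hinf : intFrom (sInf A) u ≤ τ := intFrom_le_of_forall_gt fun x hx =>
    have ⟨_, ha, hax⟩ := exists_lt_of_csInf_lt hne hx
    (intFrom_antitone u hax.le).trans (h _ ha)
  calc weightedMeasure u A ≤ volume.withDensity u (Ici (sInf A)) :=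
        (Measure.restrict_apply_le _ _).trans (measure_mono fun _ hx => csInf_le hbdd hx)
    _ = intFrom (sInf A) u := withDensity_Ici_eq_intFrom u _
    _ ≤ τ := hinf

theorem IsTailWeight.weightedMeasure_preimage_ztInv_le (hU : IsTailWeight u) {S : Set ℝ}
    (hS : IsUpperSet S) (hpos : S ⊆ Ioi 0) :
    weightedMeasure u (ztInv u ⁻¹' S) ≤ weightedMeasure u S / 2 := by
  have hsub : ztInv u ⁻¹' S ⊆ Ioi 0 := fun x hx => not_le.1 fun hx0 =>
    (hpos hx).not_ge ((hU.ztInv_monotone hx0).trans (hU.ztInv_le le_rfl))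
  refine weightedMeasure_le_of_intFrom_le hsub fun x hx => ?_
  rw [ENNReal.le_div_iff_mul_le (by simp) (by simp), mul_comm]
  calc 2 * intFrom x u ≤ intFrom (ztInv u x) u :=
        le_intFrom_tailQuantile (fun _ => hU.intFrom_ne_top) (hpos hx)
    _ = weightedMeasure u (Ioi (ztInv u x)) := (weightedMeasure_Ioi u (ztInv_nonneg u x)).symm
    _ ≤ weightedMeasure u S := measure_mono fun y hy => hS (le_of_lt hy) hx

theorem IsTailWeight.lintegral_comp_ztInv_le (hU : IsTailWeight u) {G : ℝ → ℝ≥0∞}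
    (hG : Monotone G) (hfin : ∀ x, G x ≠ ∞) (hG0 : ∀ x ≤ 0, G x = 0) :
    ∫⁻ x, G (ztInv u x) ∂weightedMeasure u ≤ (∫⁻ x, G x ∂weightedMeasure u) / 2 := by
  have hmono : Monotone fun x => (G x).toReal := fun _ y hxy =>
    ENNReal.toReal_mono (hfin y) (hG hxy)
  have hlayer : ∀ φ : ℝ → ℝ, Monotone φ → ∫⁻ x, G (φ x) ∂weightedMeasure u =
      ∫⁻ t in Ioi 0, weightedMeasure u {x | t < (G (φ x)).toReal} := fun φ hφ => by
    simpa only [ENNReal.ofReal_toReal (hfin _)] using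
      lintegral_eq_lintegral_meas_lt (weightedMeasure u) (f := fun x => (G (φ x)).toReal)
        (.of_forall fun _ => ENNReal.toReal_nonneg) (hmono.comp hφ).measurable.aemeasurable
  have hid := hlayer id monotone_id
  simp only [id_eq] at hid
  rw [hlayer _ hU.ztInv_monotone, hid, div_eq_mul_inv, ← lintegral_mul_const' _ _ (by simp)]
  refine setLIntegral_mono' measurableSet_Ioi fun t ht => ?_
  refine hU.weightedMeasure_preimage_ztInv_le (S := {x | t < (G x).toReal})
    (fun x y hxy hx => hx.trans_le (hmono hxy)) fun x hx => mem_Ioi.2 (not_le.1 fun hx0 => ?_)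
  have hlt : t < (G x).toReal := hx
  rw [hG0 x hx0, ENNReal.toReal_zero] at hlt
  exact lt_asymm hlt ht

end WeightedMeasure

section Absorption

theorem exists_rpow_add_le {κ : ℝ≥0∞} (hκ : 1 < κ) (hκtop : κ ≠ ∞) {a : ℝ} (ha : 0 < a) :
    ∃ C : ℝ≥0∞, C ≠ ∞ ∧ ∀ A B : ℝ≥0∞, (A + B) ^ a ≤ κ * A ^ a + C * B ^ a := by
  obtain ⟨δ, hδ⟩ : ∃ δ, κ ^ a⁻¹ = 1 + δ :=
    exists_add_of_le (ENNReal.one_rpow a⁻¹ ▸ ENNReal.rpow_le_rpow hκ.le (by positivity))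
  have hκδ : (1 + δ) ^ a = κ := by rw [← hδ, ENNReal.rpow_inv_rpow ha.ne']
  have hδ0 : δ ≠ 0 := by
    rintro rfl
    simp [← hκδ] at hκ
  have hδtop : δ ≠ ∞ := by
    rintro rfl
    simp [← hκδ, ha] at hκtop
  refine ⟨(1 + δ⁻¹) ^ a, ENNReal.rpow_ne_top_of_nonneg ha.le (by simp [hδ0]), fun A B => ?_⟩
  rcases le_total B (δ * A) with h | h
  · calc (A + B) ^ a ≤ ((1 + δ) * A) ^ a := by rw [add_mul, one_mul]; gcongr
      _ = κ * A ^ a := by rw [ENNReal.mul_rpow_of_nonneg _ _ ha.le, hκδ]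
      _ ≤ κ * A ^ a + (1 + δ⁻¹) ^ a * B ^ a := le_self_add
  · have hA : A ≤ δ⁻¹ * B := (ENNReal.mul_le_iff_le_inv hδ0 hδtop).1 h
    calc (A + B) ^ a ≤ ((1 + δ⁻¹) * B) ^ a := by rw [add_mul, one_mul, add_comm]; gcongr
      _ = (1 + δ⁻¹) ^ a * B ^ a := ENNReal.mul_rpow_of_nonneg _ _ ha.le
      _ ≤ κ * A ^ a + (1 + δ⁻¹) ^ a * B ^ a := le_add_self

theorem le_four_mul_of_le_add {I X : ℝ≥0∞} (hI : I ≠ ∞) (h : I ≤ 3 / 2 * (I / 2) + X) :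
    I ≤ 4 * X := by
  have hquarters : 4 * (3 / 2 * (I / 2)) = 3 * I := by
    have : (4 : ℝ≥0∞) * 2⁻¹ * 2⁻¹ = 1 := by
      rw [show (4 : ℝ≥0∞) = 2 * 2 by norm_num]
      simp [mul_assoc, ENNReal.mul_inv_cancel]
    calc 4 * (3 / 2 * (I / 2)) = 3 * I * (4 * 2⁻¹ * 2⁻¹) := by simp only [div_eq_mul_inv]; ring
      _ = 3 * I := by rw [this, mul_one]
  have hsum : 3 * I + I ≤ 3 * I + 4 * X := by
    calc 3 * I + I = 4 * I := by ring
      _ ≤ 4 * (3 / 2 * (I / 2) + X) := by gcongr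
      _ = 3 * I + 4 * X := by rw [mul_add, hquarters]
  exact (ENNReal.add_le_add_iff_left (by finiteness)).1 hsum

variable {a : ℝ} {C : ℝ≥0∞} {u F h : ℝ → ℝ≥0∞}

theorem IsTailWeight.lintegral_rpow_ne_top (hU : IsTailWeight u) (ha : 0 < a) {B : ℝ≥0∞}
    (hB : B ≠ ∞) (hFB : ∀ x, F x ≤ B) {ε : ℝ} (hε : 0 < ε) (hFε : ∀ x ≤ ε, F x = 0) :
    ∫⁻ x, F x ^ a ∂weightedMeasure u ≠ ∞ := by
  have hle : ∀ x, F x ^ a ≤ (Ioi ε).indicator (fun _ => B ^ a) x := fun x => by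
    rcases le_or_gt x ε with hx | hx
    · simp [hFε x hx, ha]
    · rw [indicator_of_mem (mem_Ioi.2 hx)]
      exact ENNReal.rpow_le_rpow (hFB x) ha.le
  refine ne_top_of_le_ne_top ?_ (lintegral_mono hle)
  rw [lintegral_indicator_const measurableSet_Ioi, weightedMeasure_Ioi u hε.le]
  exact ENNReal.mul_ne_top (ENNReal.rpow_ne_top_of_nonneg ha.le hB) (hU.intFrom_ne_top hε)

theorem IsTailWeight.lintegral_rpow_le_of_le_comp_ztInv_add (hU : IsTailWeight u) (ha : 0 < a)
    (hCtop : C ≠ ∞) (hC : ∀ A B : ℝ≥0∞, (A + B) ^ a ≤ 3 / 2 * A ^ a + C * B ^ a)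
    (hF : Monotone F) {B : ℝ≥0∞} (hB : B ≠ ∞) (hFB : ∀ x, F x ≤ B)
    {ε : ℝ} (hε : 0 < ε) (hFε : ∀ x ≤ ε, F x = 0) (hFh : ∀ x, F x ≤ F (ztInv u x) + h x) :
    ∫⁻ x, F x ^ a ∂weightedMeasure u ≤ 4 * (C * ∫⁻ x, h x ^ a ∂weightedMeasure u) := by
  have hcontract : ∫⁻ x, F (ztInv u x) ^ a ∂weightedMeasure u ≤
      (∫⁻ x, F x ^ a ∂weightedMeasure u) / 2 :=
    hU.lintegral_comp_ztInv_le (G := fun x => F x ^ a)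
      (fun x y hxy => ENNReal.rpow_le_rpow (hF hxy) ha.le)
      (fun x => ENNReal.rpow_ne_top_of_nonneg ha.le (ne_top_of_le_ne_top hB (hFB x)))
      fun x hx => by simp [hFε x (hx.trans hε.le), ha]
  refine le_four_mul_of_le_add (hU.lintegral_rpow_ne_top ha hB hFB hε hFε) ?_
  calc ∫⁻ x, F x ^ a ∂weightedMeasure u
      ≤ ∫⁻ x, (3 / 2 * F (ztInv u x) ^ a + C * h x ^ a) ∂weightedMeasure u :=
        lintegral_mono fun x => (ENNReal.rpow_le_rpow (hFh x) ha.le).trans (hC _ _)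
    _ = 3 / 2 * (∫⁻ x, F (ztInv u x) ^ a ∂weightedMeasure u) +
          C * ∫⁻ x, h x ^ a ∂weightedMeasure u := by
        have hmeas : Measurable fun x => F (ztInv u x) :=
          (hF.comp hU.ztInv_monotone).measurable
        rw [lintegral_add_left ((hmeas.pow_const a).const_mul _),
          lintegral_const_mul' _ _ (by finiteness), lintegral_const_mul' _ _ hCtop]
    _ ≤ 3 / 2 * ((∫⁻ x, F x ^ a ∂weightedMeasure u) / 2) +
          C * ∫⁻ x, h x ^ a ∂weightedMeasure u := by gcongr

theorem exists_lintegral_intTo_rpow_le (ha : 0 < a) : ∃ C : ℝ≥0∞, C ≠ ∞ ∧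
    ∀ u g : ℝ → ℝ≥0∞, IsTailWeight u → Measurable g →
      ∫⁻ x, intTo x g ^ a ∂weightedMeasure u ≤
        C * ∫⁻ x, intIoo (ztInv u x) x g ^ a ∂weightedMeasure u := by
  obtain ⟨C, hCtop, hC⟩ := exists_rpow_add_le (κ := 3 / 2)
    (by rw [ENNReal.lt_div_iff_mul_lt (by simp) (by simp)]; norm_num) (by finiteness) ha
  refine ⟨4 * C, by finiteness, fun u g hU hg => ?_⟩
  let ε : ℕ → ℝ := fun n => 1 / ((n : ℝ) + 1)
  have hε : ∀ n, 0 < ε n := fun n => by positivity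
  -- `F n` increases to `intTo · g`; vanishing near `0` and bounded, it has finite integrals, as the
  -- absorption requires.
  let F : ℕ → ℝ → ℝ≥0∞ := fun n x => min (intIoo (ε n) x g) n
  have hFmono : ∀ x, Monotone fun n => F n x := fun x m n hmn =>
    min_le_min (intIoo_mono_endpoints g (one_div_le_one_div_of_le (by positivity) (by gcongr))
      le_rfl) (by exact_mod_cast hmn)
  have hFlim : ∀ x, Filter.Tendsto (fun n => F n x) Filter.atTop (nhds (intTo x g)) := fun x => by
    simpa only [min_eq_left le_top] using (tendsto_intIoo_left g x (fun n => (hε n).le)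
      tendsto_one_div_add_atTop_nhds_zero_nat hg).min ENNReal.tendsto_nat_nhds_top
  have hFx : ∀ n, Monotone (F n) := fun n _ _ hxy =>
    min_le_min_right _ (intIoo_mono_endpoints g le_rfl hxy)
  have hFint := lintegral_tendsto_of_tendsto_of_monotone (μ := weightedMeasure u)
    (fun n => ((hFx n).measurable.pow_const a).aemeasurable)
    (.of_forall fun x m n hmn => ENNReal.rpow_le_rpow (hFmono x hmn) ha.le)
    (.of_forall fun x => (ENNReal.continuous_rpow_const.tendsto _).comp (hFlim x))
  refine le_of_tendsto' hFint fun n => ?_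
  rw [mul_assoc]
  refine hU.lintegral_rpow_le_of_le_comp_ztInv_add ha hCtop hC (hFx n) (ENNReal.natCast_ne_top n)
    (fun x => min_le_right _ _) (hε n) (fun x hx => ?_) fun x => ?_
  · simp [F, intIoo, Ioo_eq_empty hx.not_gt]
  · calc min (intIoo (ε n) x g) n
        ≤ min (intIoo (ε n) (ztInv u x) g + intIoo (ztInv u x) x g) n :=
          min_le_min_right _ (intIoo_le_add g _ _ _)
      _ ≤ F n (ztInv u x) + intIoo (ztInv u x) x g := by
          rw [← min_add_add_right]
          exact min_le_min_left _ le_self_add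

end Absorption

section WeightedNorm

variable {p : ℝ} {u v f g : ℝ → ℝ≥0∞}

theorem lpN_rpow (hp : p ≠ 0) (v f : ℝ → ℝ≥0∞) :
    lpN p v f ^ p = ∫⁻ x in Ioi 0, f x ^ p * v x := by
  rw [lpN, one_div, ENNReal.rpow_inv_rpow hp]

theorem lpN_rpow_eq_lintegral (hp : p ≠ 0) (hu : Measurable u) (hf : Measurable f) :
    lpN p u f ^ p = ∫⁻ x, f x ^ p ∂weightedMeasure u := by
  simp only [lpN_rpow hp, lintegral_weightedMeasure hu (hf.pow_const p), mul_comm (u _)]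

theorem lpN_eq_lintegral (hp : 0 < p) (hu : Measurable u) (hf : Measurable f) :
    lpN p u f = (∫⁻ x, f x ^ p ∂weightedMeasure u) ^ (1 / p) := by
  rw [← lpN_rpow_eq_lintegral hp.ne' hu hf, one_div, ENNReal.rpow_rpow_inv hp.ne']

theorem lpN_mono_ae (hp : 0 < p) (hu : Measurable u) (hf : Measurable f) (hg : Measurable g)
    (h : ∀ᵐ x ∂weightedMeasure u, f x ≤ g x) : lpN p u f ≤ lpN p u g := by
  rw [lpN_eq_lintegral hp hu hf, lpN_eq_lintegral hp hu hg]
  gcongr ?_ ^ _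
  exact lintegral_mono_ae (h.mono fun x hx => ENNReal.rpow_le_rpow hx hp.le)

theorem ae_lt_top_of_lpN_ne_top (hp : 0 < p) (hu : Measurable u) (hf : Measurable f)
    (h : lpN p u f ≠ ∞) : ∀ᵐ x ∂weightedMeasure u, f x < ∞ := by
  have hint : ∫⁻ x, f x ^ p ∂weightedMeasure u ≠ ∞ :=
    lpN_rpow_eq_lintegral hp.ne' hu hf ▸ ENNReal.rpow_ne_top_of_nonneg hp.le h
  exact (ae_lt_top (hf.pow_const p) hint).mono fun x hx => (ENNReal.rpow_lt_top_iff_of_pos hp).1 hx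

theorem lpN_mono (hp : 0 ≤ p) (h : ∀ x, f x ≤ g x) : lpN p v f ≤ lpN p v g := by
  unfold lpN
  gcongr
  exact h _

theorem lpN_const_mul (hp : 0 < p) {c : ℝ≥0∞} (hc : c ≠ ∞) :
    lpN p v (fun x => c * f x) = c * lpN p v f := by
  have hcp : c ^ p ≠ ∞ := ENNReal.rpow_ne_top_of_nonneg hp.le hc
  simp only [lpN, ENNReal.mul_rpow_of_nonneg _ _ hp.le, mul_assoc, lintegral_const_mul' _ _ hcp]
  rw [ENNReal.mul_rpow_of_nonneg _ _ (by positivity), one_div, ENNReal.rpow_rpow_inv hp.ne']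

theorem intFrom_rpow_mul_le_lpN {r : ℝ} (hr : 0 < r) {F : ℝ → ℝ≥0∞} (hF : Monotone F) {t : ℝ}
    (ht : 0 ≤ t) : intFrom t u ^ (1 / r) * F t ≤ lpN r u F := by
  have hpow : F t = (F t ^ r) ^ (1 / r) := by rw [one_div, ENNReal.rpow_rpow_inv hr.ne']
  rw [hpow, ← ENNReal.mul_rpow_of_nonneg _ _ (by positivity)]
  refine ENNReal.rpow_le_rpow ?_ (by positivity)
  calc intFrom t u * F t ^ r ≤ ∫⁻ x in Ioi t, u x * F t ^ r := lintegral_mul_const_le _ _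
    _ ≤ ∫⁻ x in Ioi t, F x ^ r * u x := by
        refine setLIntegral_mono' measurableSet_Ioi fun x hx => ?_
        rw [mul_comm]
        gcongr
        exact hF (le_of_lt hx)
    _ ≤ ∫⁻ x in Ioi 0, F x ^ r * u x := lintegral_mono_set (Ioi_subset_Ioi ht)

end WeightedNorm

section Volterra

variable {q : ℝ} {w f : ℝ → ℝ≥0∞} {k : ℝ → ℝ → ℝ≥0∞}

/-- The Volterra operator `∫₀ʸ k(y,z) f(z) dz` with kernel `k`, the inner operator of `𝒮`. -/
def volterra (k : ℝ → ℝ → ℝ≥0∞) (f : ℝ → ℝ≥0∞) (y : ℝ) : ℝ≥0∞ :=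
  intTo y fun z => k y z * f z

theorem opSc_eq_volterra (q : ℝ) (w : ℝ → ℝ≥0∞) (k : ℝ → ℝ → ℝ≥0∞) (f : ℝ → ℝ≥0∞) (x : ℝ) :
    opSc q w k f x = intTo x (fun y => w y * volterra k f y ^ q) ^ (1 / q) := rfl

theorem measurable_volterra (hk : Measurable (Function.uncurry k)) (hf : Measurable f) :
    Measurable (volterra k f) :=
  measurable_intIoo (c := fun _ => 0) (h := fun y z => k y z * f z) measurable_const measurable_id
    (hk.mul (hf.comp measurable_snd))

theorem volterra_const_mul {c : ℝ≥0∞} (hc : c ≠ ∞) (y : ℝ) :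
    volterra k (fun z => c * f z) y = c * volterra k f y := by
  simp only [volterra, intTo, mul_left_comm _ c, lintegral_const_mul' _ _ hc]

theorem opSc_monotone (hq : 0 ≤ q) (w : ℝ → ℝ≥0∞) (k : ℝ → ℝ → ℝ≥0∞) (f : ℝ → ℝ≥0∞) :
    Monotone (opSc q w k f) :=
  fun _ _ hxy => ENNReal.rpow_le_rpow (intTo_monotone _ hxy) (by positivity)

theorem opSc_mono (hq : 0 ≤ q) {g : ℝ → ℝ≥0∞} (h : ∀ z, f z ≤ g z) (x : ℝ) :
    opSc q w k f x ≤ opSc q w k g x :=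
  ENNReal.rpow_le_rpow (lintegral_mono fun _ => mul_le_mul_right (ENNReal.rpow_le_rpow
    (lintegral_mono fun z => mul_le_mul_right (h z) _) hq) _) (by positivity)

theorem opSc_const_mul (hq : 0 < q) {c : ℝ≥0∞} (hc : c ≠ ∞) (x : ℝ) :
    opSc q w k (fun z => c * f z) x = c * opSc q w k f x := by
  have hcq : c ^ q ≠ ∞ := ENNReal.rpow_ne_top_of_nonneg hq.le hc
  simp only [opSc_eq_volterra, volterra_const_mul hc, ENNReal.mul_rpow_of_nonneg _ _ hq.le, intTo,
    mul_left_comm (w _), lintegral_const_mul' _ _ hcq]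
  rw [ENNReal.mul_rpow_of_nonneg _ _ (by positivity), one_div, ENNReal.rpow_rpow_inv hq.ne']

theorem opSc_zero (hq : 0 < q) : opSc q w k f 0 = 0 := by
  simp [opSc, intTo, hq]

theorem lpN_calHsd (hq : 0 < q) (t : ℝ) :
    lpN q w (calHsd k t f) = opSc q w k f t := by
  unfold lpN opSc intTo
  congr 1
  rw [setLIntegral_congr Ioo_ae_eq_Ioc, ← lintegral_indicator measurableSet_Ioi,
    ← lintegral_indicator measurableSet_Ioc]
  congr 1 with y
  by_cases h0 : 0 < y <;> by_cases ht : y ≤ t <;>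
    simp [calHsd, indicator, intTo, h0, ht, hq, mul_comm]

end Volterra

section Oinarov

variable {D : ℝ≥0∞} {k : ℝ → ℝ → ℝ≥0∞} {c y : ℝ}

theorem Oinarov.add_le (hO : Oinarov k D) (hD0 : D ≠ 0) (hD : D ≠ ∞) {x z : ℝ} (hy : 0 ≤ y)
    (hyz : y ≤ z) (hzx : z ≤ x) : k x z + k z y ≤ D * k x y := by
  rw [← ENNReal.inv_mul_le_iff hD0 hD]
  exact (hO.2 x z y hy hyz hzx).1

theorem Oinarov.volterra_le (hO : Oinarov k D) (hD0 : D ≠ 0) (hD : D ≠ ∞) (f : ℝ → ℝ≥0∞)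
    (hcy : c ≤ y) : volterra k f c ≤ D * volterra k f y := by
  calc volterra k f c ≤ ∫⁻ z in Ioo 0 c, D * (k y z * f z) := by
        refine setLIntegral_mono' measurableSet_Ioo fun z hz => ?_
        rw [← mul_assoc]
        gcongr
        exact le_add_self.trans (hO.add_le hD0 hD hz.1.le hz.2.le hcy)
    _ = D * intTo c fun z => k y z * f z := lintegral_const_mul' _ _ hD
    _ ≤ D * volterra k f y := by
        gcongr
        exact intTo_monotone _ hcy

theorem Oinarov.mul_intTo_le (hO : Oinarov k D) (hD0 : D ≠ 0) (hD : D ≠ ∞) (f : ℝ → ℝ≥0∞)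
    (hcy : c ≤ y) : k y c * intTo c f ≤ D * volterra k f y := by
  calc k y c * intTo c f ≤ ∫⁻ z in Ioo 0 c, k y c * f z := lintegral_const_mul_le _ _
    _ ≤ ∫⁻ z in Ioo 0 c, D * (k y z * f z) := by
        refine setLIntegral_mono' measurableSet_Ioo fun z hz => ?_
        rw [← mul_assoc]
        gcongr
        exact le_self_add.trans (hO.add_le hD0 hD hz.1.le hz.2.le hcy)
    _ = D * intTo c fun z => k y z * f z := lintegral_const_mul' _ _ hD
    _ ≤ D * volterra k f y := by
        gcongr
        exact intTo_monotone _ hcy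

theorem Oinarov.volterra_le_add (hO : Oinarov k D) (hD : D ≠ ∞) {f : ℝ → ℝ≥0∞}
    (hf : Measurable f) (hcy : c ≤ y) :
    volterra k f y ≤ D * (volterra k f c + k y c * intTo c f) +
      intIoo c y fun z => k y z * f z := by
  have hkf : Measurable fun z => k y c * f z := hf.const_mul _
  have hle : intTo c (fun z => k y z * f z) ≤ D * (volterra k f c + k y c * intTo c f) := by
    calc intTo c (fun z => k y z * f z)
        ≤ ∫⁻ z in Ioo 0 c, D * (k c z * f z + k y c * f z) := by
          refine setLIntegral_mono' measurableSet_Ioo fun z hz => ?_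
          rw [← add_mul, ← mul_assoc, add_comm (k c z)]
          gcongr
          exact (hO.2 y c z hz.1.le hz.2.le hcy).2
      _ = D * (volterra k f c + k y c * intTo c f) := by
          rw [lintegral_const_mul' _ _ hD, lintegral_add_right _ hkf, lintegral_const_mul _ hf]
          rfl
  calc volterra k f y ≤ intTo c (fun z => k y z * f z) + intIoo c y fun z => k y z * f z :=
        intIoo_le_add _ 0 c y
    _ ≤ _ := by gcongr

end Oinarov

section LowerBoundPointwise

variable {p q r : ℝ} {D : ℝ≥0∞} {u v w : ℝ → ℝ≥0∞} {k : ℝ → ℝ → ℝ≥0∞}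

/-- The operator whose norm is `𝐀₀`. -/
def opA0 (q : ℝ) (u w : ℝ → ℝ≥0∞) (k : ℝ → ℝ → ℝ≥0∞) (f : ℝ → ℝ≥0∞) (x : ℝ) : ℝ≥0∞ :=
  intIoo (ztInv2 u x) x w ^ (1 / q) * volterra k f (ztInv2 u x)

/-- The operator whose norm is `𝐀₁`. -/
def opA1 (q : ℝ) (u w : ℝ → ℝ≥0∞) (k : ℝ → ℝ → ℝ≥0∞) (f : ℝ → ℝ≥0∞) (x : ℝ) : ℝ≥0∞ :=
  intIoo (ztInv2 u x) x (fun y => w y * k y (ztInv2 u x) ^ q) ^ (1 / q) * intTo (ztInv2 u x) f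

theorem mul_rpow_one_div_mul_rpow (hr : 0 ≤ r) (a b c : ℝ≥0∞) :
    a * b ^ (r / q) * c ^ r = (b ^ (1 / q) * c) ^ r * a := by
  rw [ENNReal.mul_rpow_of_nonneg _ _ hr, ← ENNReal.rpow_mul, one_div_mul_eq_div]
  ring

theorem bfA0_eq_leastC (hr : 0 ≤ r) :
    bfA0 p r q u v w k = leastC (fun f => lpN r u (opA0 q u w k f)) (lpN p v) := by
  simp only [bfA0, lpN, opA0, mul_rpow_one_div_mul_rpow hr]
  rfl

theorem bfA1_eq_leastC (hr : 0 ≤ r) :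
    bfA1 p r q u v w k = leastC (fun f => lpN r u (opA1 q u w k f)) (lpN p v) := by
  simp only [bfA1, lpN, opA1, mul_rpow_one_div_mul_rpow hr]

theorem intIoo_rpow_mul_le_opSc (hq : 0 < q) (hD : D ≠ ∞) {f g : ℝ → ℝ≥0∞} {P : ℝ≥0∞} {c x : ℝ}
    (hc : 0 ≤ c) (h : ∀ y, c < y → g y * P ≤ D * volterra k f y) :
    intIoo c x (fun y => w y * g y ^ q) ^ (1 / q) * P ≤ D * opSc q w k f x := by
  have hDq : D ^ q ≠ ∞ := ENNReal.rpow_ne_top_of_nonneg hq.le hD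
  have hroot : ∀ a : ℝ≥0∞, a = (a ^ q) ^ (1 / q) := fun a => by
    rw [one_div, ENNReal.rpow_rpow_inv hq.ne']
  rw [opSc_eq_volterra, hroot P, hroot D, ← ENNReal.mul_rpow_of_nonneg _ _ (by positivity),
    ← ENNReal.mul_rpow_of_nonneg _ _ (by positivity)]
  refine ENNReal.rpow_le_rpow ?_ (by positivity)
  calc intIoo c x (fun y => w y * g y ^ q) * P ^ q
      ≤ ∫⁻ y in Ioo c x, w y * g y ^ q * P ^ q := lintegral_mul_const_le _ _
    _ ≤ ∫⁻ y in Ioo c x, D ^ q * (w y * volterra k f y ^ q) := by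
        refine setLIntegral_mono' measurableSet_Ioo fun y hy => ?_
        calc w y * g y ^ q * P ^ q = w y * (g y * P) ^ q := by
              rw [ENNReal.mul_rpow_of_nonneg _ _ hq.le, mul_assoc]
          _ ≤ w y * (D * volterra k f y) ^ q := by
              exact mul_le_mul_right (ENNReal.rpow_le_rpow (h y hy.1) hq.le) _
          _ = D ^ q * (w y * volterra k f y ^ q) := by
              rw [ENNReal.mul_rpow_of_nonneg _ _ hq.le, mul_left_comm]
    _ = D ^ q * intIoo c x fun y => w y * volterra k f y ^ q := lintegral_const_mul' _ _ hDq
    _ ≤ D ^ q * intTo x fun y => w y * volterra k f y ^ q := by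
        gcongr
        exact intIoo_le_intTo _ hc x

theorem bfA0_le_mul_CSc (hq : 0 < q) (hr : 0 < r) (hD0 : D ≠ 0) (hD : D ≠ ∞) (hO : Oinarov k D) :
    bfA0 p r q u v w k ≤ D * CSc p r q u v w k := by
  rw [bfA0_eq_leastC hr.le]
  refine leastC_le_mul_leastC hD0 fun f _ => ?_
  rw [← lpN_const_mul hr hD]
  refine lpN_mono hr.le fun x => ?_
  simpa [opA0] using intIoo_rpow_mul_le_opSc (w := w) (x := x) (g := fun _ => 1) hq hD
    (ztInv2_nonneg u x) fun y hy => (one_mul _).trans_le (hO.volterra_le hD0 hD f hy.le)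

theorem bfA1_le_mul_CSc (hq : 0 < q) (hr : 0 < r) (hD0 : D ≠ 0) (hD : D ≠ ∞) (hO : Oinarov k D) :
    bfA1 p r q u v w k ≤ D * CSc p r q u v w k := by
  rw [bfA1_eq_leastC hr.le]
  refine leastC_le_mul_leastC hD0 fun f _ => ?_
  rw [← lpN_const_mul hr hD]
  exact lpN_mono hr.le fun x => intIoo_rpow_mul_le_opSc hq hD (ztInv2_nonneg u x)
    fun y hy => hO.mul_intTo_le hD0 hD f hy.le

end LowerBoundPointwise

section TruncatedNorms

variable {p q r : ℝ} {u v w : ℝ → ℝ≥0∞} {k : ℝ → ℝ → ℝ≥0∞} {t : ℝ}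

/-- The norm of `ℋ*_t` from `L^p_v` to `L^q_w`. -/
def normHsd (p q : ℝ) (v w : ℝ → ℝ≥0∞) (k : ℝ → ℝ → ℝ≥0∞) (t : ℝ) : ℝ≥0∞ :=
  leastC (fun f => lpN q w (calHsd k t f)) (lpN p v)

/-- The norm of `ℋ*_{c,d}` from `L^p_v` to `L^q_w`. -/
def normHscd (p q : ℝ) (u v w : ℝ → ℝ≥0∞) (k : ℝ → ℝ → ℝ≥0∞) (c d : ℝ) : ℝ≥0∞ :=
  leastC (fun f => lpN q w (calHscd u k c d f)) (lpN p v)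

theorem normHsd_eq_leastC_opSc (hq : 0 < q) :
    normHsd p q v w k t = leastC (fun f => opSc q w k f t) (lpN p v) := by
  simp only [normHsd, lpN_calHsd hq]

theorem normHsd_zero (hq : 0 < q) : normHsd p q v w k 0 = 0 := by
  simp only [normHsd_eq_leastC_opSc hq, opSc_zero hq]
  exact nonpos_iff_eq_zero.1 (leastC_le_of_ne_top fun f _ _ => zero_le)

theorem normHscd_le_normHsd (hq : 0 ≤ q) {c d : ℝ} (hc : 0 ≤ c) (hd : d ≤ t) :
    normHscd p q u v w k c d ≤ normHsd p q v w k t := by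
  rw [← one_mul (normHsd p q v w k t)]
  refine leastC_le_mul_leastC one_ne_zero fun f _ => ?_
  rw [one_mul]
  refine lpN_mono hq fun x => ?_
  unfold calHscd calHsd
  split_ifs with hcd ht
  · exact intIoo_le_intTo _ (ztInv_nonneg u c) x
  · exact absurd ⟨hc.trans_lt hcd.1, hcd.2.trans hd⟩ ht
  all_goals exact zero_le

theorem IsTailWeight.intFrom_rpow_mul_normHsd_le (hU : IsTailWeight u) (hq : 0 < q) (hr : 0 < r)
    (ht : 0 < t) : intFrom t u ^ (1 / r) * normHsd p q v w k t ≤ CSc p r q u v w k := by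
  have hU0 : intFrom t u ^ (1 / r) ≠ 0 :=
    (ENNReal.rpow_pos (pos_iff_ne_zero.2 (hU.intFrom_ne_zero t)) (hU.intFrom_ne_top ht)).ne'
  have hUtop : intFrom t u ^ (1 / r) ≠ ∞ :=
    ENNReal.rpow_ne_top_of_nonneg (by positivity) (hU.intFrom_ne_top ht)
  rw [ENNReal.mul_le_iff_le_inv hU0 hUtop, normHsd_eq_leastC_opSc hq]
  refine leastC_le_mul_leastC (ENNReal.inv_ne_zero.2 hUtop) fun f _ => ?_
  rw [← ENNReal.mul_le_iff_le_inv hU0 hUtop]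
  exact intFrom_rpow_mul_le_lpN hr (opSc_monotone hq.le w k f) ht.le

theorem exists_near_extremal (hp : 0 < p) (hq : 0 < q) (hN : normHsd p q v w k t ≠ ∞) :
    ∃ g : ℝ → ℝ≥0∞, Measurable g ∧ lpN p v g ≤ 1 ∧
      normHsd p q v w k t / 2 ≤ opSc q w k g t := by
  rw [normHsd_eq_leastC_opSc hq] at hN ⊢
  set N := leastC (fun f => opSc q w k f t) (lpN p v)
  rcases eq_or_ne N 0 with h0 | h0
  · exact ⟨fun _ => 0, measurable_const, by simp [lpN, hp], by simp [h0]⟩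
  obtain ⟨f, hf, hftop, hlt⟩ :
      ∃ f, Measurable f ∧ lpN p v f ≠ ∞ ∧ N / 2 * lpN p v f < opSc q w k f t := by
    by_contra! hall
    exact (leastC_le_of_ne_top hall).not_gt (ENNReal.half_lt_self h0 hN)
  have hf0 : lpN p v f ≠ 0 := fun hzero => by
    have hle : opSc q w k f t ≤ N * lpN p v f := le_leastC_mul hN hf hftop
    simp only [hzero, mul_zero] at hle hlt
    exact hle.not_gt hlt
  have hinv : (lpN p v f)⁻¹ ≠ ∞ := ENNReal.inv_ne_top.2 hf0
  refine ⟨fun z => (lpN p v f)⁻¹ * f z, hf.const_mul _, ?_, ?_⟩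
  · rw [lpN_const_mul hp hinv, ENNReal.inv_mul_cancel hf0 hftop]
  · rw [opSc_const_mul hq hinv, ← ENNReal.mul_le_iff_le_inv hf0 hftop, mul_comm]
    exact hlt.le

end TruncatedNorms

section DyadicPoints

variable {u : ℝ → ℝ≥0∞}

theorem IsTailWeight.zpow_mul_tailQuantile_le (hU : IsTailWeight u) {H : ℝ → ℝ≥0∞}
    (hH : Monotone H) (hH0 : H 0 = 0) (n : ℤ) :
    2 ^ n * H (tailQuantile u (2 ^ n)) ≤ 2 * ∫⁻ x in
      Ioc (tailQuantile u (2 ^ n)) (tailQuantile u (2 ^ (n - 1))), H x ∂weightedMeasure u := by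
  have hfin : ∀ t : ℝ, 0 < t → intFrom t u ≠ ∞ := fun _ => hU.intFrom_ne_top
  have hpow : ∀ m : ℤ, (2 : ℝ≥0∞) ^ m ≠ 0 ∧ (2 : ℝ≥0∞) ^ m ≠ ∞ := fun m =>
    ⟨(ENNReal.zpow_pos (by simp) (by simp) m).ne', (ENNReal.zpow_lt_top (by simp) (by simp) m).ne⟩
  have hdouble : (2 : ℝ≥0∞) ^ n = 2 * 2 ^ (n - 1) := by
    simpa only [add_sub_cancel, zpow_one] using
      ENNReal.zpow_add (x := 2) (by simp) (by simp) 1 (n - 1)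
  set y := tailQuantile u (2 ^ n)
  set z := tailQuantile u (2 ^ (n - 1))
  rcases (tailQuantile_nonneg u (2 ^ n)).eq_or_lt with hy | hy
  · simp [y, ← hy, hH0]
  have hmass : 2 ^ (n - 1) ≤ weightedMeasure u (Ioc y z) := by
    refine (ENNReal.add_le_add_iff_right (hpow (n - 1)).2).1 ?_
    calc (2 : ℝ≥0∞) ^ (n - 1) + 2 ^ (n - 1) = 2 ^ n := by rw [hdouble, two_mul]
      _ ≤ intFrom y u := le_intFrom_tailQuantile hfin hy
      _ = weightedMeasure u (Ioi y) := (weightedMeasure_Ioi u hy.le).symm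
      _ ≤ weightedMeasure u (Ioc y z) + weightedMeasure u (Ioi z) :=
          (measure_mono Ioi_subset_Ioc_union_Ioi).trans (measure_union_le _ _)
      _ ≤ weightedMeasure u (Ioc y z) + 2 ^ (n - 1) := by
          rw [weightedMeasure_Ioi u (tailQuantile_nonneg _ _)]
          gcongr
          exact intFrom_tailQuantile_le hfin (hpow (n - 1)).1
  calc 2 ^ n * H y = 2 * (H y * 2 ^ (n - 1)) := by rw [hdouble]; ring
    _ ≤ 2 * (H y * weightedMeasure u (Ioc y z)) := by gcongr
    _ = 2 * ∫⁻ _ in Ioc y z, H y ∂weightedMeasure u := by rw [setLIntegral_const]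
    _ ≤ 2 * ∫⁻ x in Ioc y z, H x ∂weightedMeasure u := by
        gcongr 2 * ?_
        exact setLIntegral_mono' measurableSet_Ioc fun x hx => hH hx.1.le

theorem IsTailWeight.tsum_zpow_mul_tailQuantile_le (hU : IsTailWeight u) {H : ℝ → ℝ≥0∞}
    (hH : Monotone H) (hH0 : H 0 = 0) :
    ∑' n : ℤ, 2 ^ n * H (tailQuantile u (2 ^ n)) ≤ 2 * ∫⁻ x, H x ∂weightedMeasure u := by
  have hanti : Antitone fun n : ℤ => tailQuantile u (2 ^ n) := fun m n hmn =>
    tailQuantile_le_tailQuantile (fun _ => hU.intFrom_ne_top)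
      (ENNReal.zpow_pos (by simp) (by simp) m).ne' (ENNReal.zpow_le_of_le (by norm_num) hmn)
  have hdisj : Pairwise (Function.onFun Disjoint fun n : ℤ =>
      Ioc (tailQuantile u (2 ^ n)) (tailQuantile u (2 ^ (n - 1)))) :=
    hanti.pairwise_disjoint_on_Ioc_pred
  calc ∑' n : ℤ, 2 ^ n * H (tailQuantile u (2 ^ n))
      ≤ ∑' n : ℤ, 2 * ∫⁻ x in Ioc (tailQuantile u (2 ^ n)) (tailQuantile u (2 ^ (n - 1))), H x
          ∂weightedMeasure u := ENNReal.tsum_le_tsum (hU.zpow_mul_tailQuantile_le hH hH0)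
    _ = 2 * ∫⁻ x in ⋃ n : ℤ, Ioc (tailQuantile u (2 ^ n)) (tailQuantile u (2 ^ (n - 1))), H x
          ∂weightedMeasure u := by
        rw [ENNReal.tsum_mul_left, lintegral_iUnion (fun _ => measurableSet_Ioc) hdisj]
    _ ≤ 2 * ∫⁻ x, H x ∂weightedMeasure u := by
        gcongr
        exact Measure.restrict_le_self

theorem IsTailWeight.lintegral_rpow_intFrom_mul_le (hU : IsTailWeight u) (hu : Measurable u)
    {α : ℝ} (hα : 0 ≤ α) {Φ : ℝ → ℝ≥0∞} {M : ℤ → ℝ≥0∞}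
    (hΦ : ∀ n x, 0 < x → 2 ^ n ≤ intFrom x u → Φ x ≤ M n) :
    ∫⁻ x in Ioi 0, u x * intFrom x u ^ α * Φ x ≤ ∑' n : ℤ, (2 ^ (n + 1)) ^ (1 + α) * M n := by
  let L : ℤ → Set ℝ := fun n => {x | 0 < x ∧ intFrom x u ∈ Ico (2 ^ n) (2 ^ (n + 1))}
  have hL : ∀ n, MeasurableSet (L n) := fun n =>
    measurableSet_Ioi.inter ((intFrom_antitone u).measurable measurableSet_Ico)
  have hcover : Ioi 0 ⊆ ⋃ n, L n := fun x hx =>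
    have ⟨n, hn⟩ := ENNReal.exists_mem_Ico_zpow (hU.intFrom_ne_zero x) (hU.intFrom_ne_top hx)
      one_lt_two ENNReal.ofNat_ne_top
    mem_iUnion.2 ⟨n, hx, hn⟩
  have hmass : ∀ n, ∫⁻ x in L n, u x ≤ 2 ^ (n + 1) := fun n => by
    have hpos : L n ⊆ Ioi 0 := fun x hx => hx.1
    rw [← withDensity_apply _ (hL n), ← inter_eq_left.2 hpos, ← Measure.restrict_apply (hL n)]
    exact weightedMeasure_le_of_intFrom_le hpos fun x hx => hx.2.2.le
  calc ∫⁻ x in Ioi 0, u x * intFrom x u ^ α * Φ x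
      ≤ ∑' n, ∫⁻ x in L n, u x * intFrom x u ^ α * Φ x :=
        (lintegral_mono_set hcover).trans (lintegral_iUnion_le _ _)
    _ ≤ ∑' n, ∫⁻ x in L n, u x * ((2 ^ (n + 1)) ^ α * M n) := by
        refine ENNReal.tsum_le_tsum fun n => setLIntegral_mono' (hL n) fun x hx => ?_
        rw [mul_assoc]
        gcongr
        · exact hx.2.2.le
        · exact hΦ n x hx.1 hx.2.1
    _ ≤ ∑' n : ℤ, (2 ^ (n + 1)) ^ (1 + α) * M n := by
        refine ENNReal.tsum_le_tsum fun n => ?_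
        rw [lintegral_mul_const _ hu, ENNReal.rpow_add_of_nonneg _ _ zero_le_one hα,
          ENNReal.rpow_one, mul_assoc]
        gcongr
        exact hmass n

end DyadicPoints

section LowerBoundTruncated

variable {p q r s : ℝ} {u v w : ℝ → ℝ≥0∞} {k : ℝ → ℝ → ℝ≥0∞}

theorem bfA2_of_le (hpr : p ≤ r) : bfA2 p r q u v w k =
    ⨆ (t : ℝ) (_ : 0 < t), intFrom t u ^ (1 / r) * normHsd p q v w k t :=
  if_pos hpr

theorem bfA2_of_holderTriple (hs : s.HolderTriple p r) : bfA2 p r q u v w k =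
    (∫⁻ x in Ioi 0, u x * intFrom x u ^ (s / p) *
      normHscd p q u v w k (ztInv u x) (zt u x) ^ s) ^ (1 / s) := by
  simp only [bfA2, hs.symm.lt.not_ge, if_false, one_div, hs.inv_sub_inv_eq_inv, inv_inv, normHscd]

theorem tsum_rpow_le_of_forall_sum_mul_le {ι : Type*} {a b : ℝ} (hab : a.HolderConjugate b)
    {c : ι → ℝ≥0∞} {K : ℝ≥0∞} (hc : ∀ i, c i ≠ ∞)
    (h : ∀ (F : Finset ι) (d : ι → ℝ≥0∞), (∀ i, d i ≠ ∞) →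
      ∑ i ∈ F, c i * d i ≤ K * (∑ i ∈ F, d i ^ b) ^ (1 / b)) :
    ∑' i, c i ^ a ≤ K ^ a := by
  rw [ENNReal.tsum_eq_iSup_sum]
  refine iSup_le fun F => ?_
  set S := ∑ i ∈ F, c i ^ a
  have hS : S ≠ ∞ :=
    ENNReal.sum_ne_top.2 fun i _ => ENNReal.rpow_ne_top_of_nonneg hab.nonneg (hc i)
  rcases eq_or_ne S 0 with h0 | h0
  · simp [h0]
  have hprod : ∀ i, c i * c i ^ (a - 1) = c i ^ a := fun i => by
    nth_rw 1 [← ENNReal.rpow_one (c i)]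
    rw [← ENNReal.rpow_add_of_nonneg _ _ zero_le_one hab.sub_one_pos.le, add_sub_cancel]
  have hdual : S ≤ K * S ^ (1 / b) := by
    simpa only [hprod, ← ENNReal.rpow_mul, hab.sub_one_mul_conj] using
      h F (fun i => c i ^ (a - 1)) fun i =>
        ENNReal.rpow_ne_top_of_nonneg hab.sub_one_pos.le (hc i)
  have hK : S ^ (1 / a) ≤ K := by
    rwa [one_div, ← hab.symm.one_sub_inv, ENNReal.rpow_sub _ _ h0 hS, ENNReal.rpow_one,
      ← one_div, ENNReal.div_le_iff (ENNReal.rpow_pos (pos_iff_ne_zero.2 h0) hS).ne'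
        (ENNReal.rpow_ne_top_of_nonneg hab.symm.one_div_nonneg hS)]
  simpa only [one_div, ENNReal.rpow_inv_rpow hab.ne_zero] using
    ENNReal.rpow_le_rpow hK hab.nonneg

theorem lpN_sum_rpow {ι : Type*} (hp : 0 < p) (hv : Measurable v) (F : Finset ι)
    {φ : ι → ℝ → ℝ≥0∞} (hφ : ∀ i, Measurable (φ i)) :
    lpN p v (fun x => (∑ i ∈ F, φ i x ^ p) ^ (1 / p)) = (∑ i ∈ F, lpN p v (φ i) ^ p) ^ (1 / p) := by
  simp only [lpN_rpow hp.ne']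
  have hmeas : ∀ i ∈ F, Measurable fun x => φ i x ^ p * v x := fun i _ =>
    ((hφ i).pow_const p).mul hv
  rw [lpN, ← lintegral_finsetSum F hmeas]
  simp only [one_div, ENNReal.rpow_inv_rpow hp.ne', Finset.sum_mul]

theorem lintegral_opSc_rpow_le (hr : 0 < r) (hq : 0 ≤ q) (hu : Measurable u)
    (hC : CSc p r q u v w k ≠ ∞) {f : ℝ → ℝ≥0∞} (hf : Measurable f) (hfv : lpN p v f ≠ ∞) :
    ∫⁻ x, opSc q w k f x ^ r ∂weightedMeasure u ≤ (CSc p r q u v w k * lpN p v f) ^ r := by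
  rw [← lpN_rpow_eq_lintegral hr.ne' hu (opSc_monotone hq w k f).measurable]
  exact ENNReal.rpow_le_rpow (le_leastC_mul hC hf hfv) hr.le

theorem IsTailWeight.normHsd_tailQuantile_ne_top (hU : IsTailWeight u) (hq : 0 < q) (hr : 0 < r)
    (hC : CSc p r q u v w k ≠ ∞) (τ : ℝ≥0∞) : normHsd p q v w k (tailQuantile u τ) ≠ ∞ := by
  rcases (tailQuantile_nonneg u τ).eq_or_lt with h0 | hpos
  · simp [← h0, normHsd_zero hq]
  · intro htop
    have hle := hU.intFrom_rpow_mul_normHsd_le (p := p) (v := v) (w := w) (k := k) hq hr hpos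
    rw [htop, ENNReal.mul_top (ENNReal.rpow_pos (pos_iff_ne_zero.2 (hU.intFrom_ne_zero _))
      (hU.intFrom_ne_top hpos)).ne'] at hle
    exact hC (top_le_iff.1 hle)

theorem exists_forall_mul_normHsd_le_opSc {ι : Type*} (hp : 0 < p) (hq : 0 < q) (hv : Measurable v)
    {t : ι → ℝ} (hN : ∀ i, normHsd p q v w k (t i) ≠ ∞) (F : Finset ι) {e : ι → ℝ≥0∞}
    (he : ∀ i, e i ≠ ∞) :
    ∃ f : ℝ → ℝ≥0∞, Measurable f ∧ lpN p v f ≤ (∑ i ∈ F, e i ^ p) ^ (1 / p) ∧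
      ∀ i ∈ F, normHsd p q v w k (t i) * e i ≤ 2 * opSc q w k f (t i) := by
  choose g hg hg1 hgN using fun i => exists_near_extremal hp hq (hN i)
  have hφ : ∀ i, Measurable fun x => e i * g i x := fun i => (hg i).const_mul _
  let f : ℝ → ℝ≥0∞ := fun x => (∑ i ∈ F, (e i * g i x) ^ p) ^ (1 / p)
  have hgf : ∀ i ∈ F, ∀ x, e i * g i x ≤ f x := fun i hi x => by
    rw [← ENNReal.rpow_le_rpow_iff hp]
    simp only [f, one_div, ENNReal.rpow_inv_rpow hp.ne']
    exact Finset.single_le_sum (f := fun i => (e i * g i x) ^ p) (fun _ _ => zero_le) hi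
  refine ⟨f, (Finset.measurable_sum F fun i _ => (hφ i).pow_const p).pow_const _, ?_,
    fun i hi => ?_⟩
  · rw [lpN_sum_rpow hp hv F hφ]
    gcongr with i _
    rw [lpN_const_mul hp (he i)]
    exact mul_le_of_le_one_right' (hg1 i)
  · calc normHsd p q v w k (t i) * e i ≤ 2 * opSc q w k (g i) (t i) * e i := by
          gcongr
          rw [mul_comm]
          exact (ENNReal.div_le_iff_le_mul (by simp) (by simp)).1 (hgN i)
      _ = 2 * opSc q w k (fun x => e i * g i x) (t i) := by
          rw [opSc_const_mul hq (he i)]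
          ring
      _ ≤ 2 * opSc q w k f (t i) := by
          gcongr
          exact opSc_mono hq.le (hgf i hi) _

theorem IsTailWeight.sum_zpow_mul_normHsd_rpow_mul_le (hU : IsTailWeight u) (hp : 0 < p)
    (hq : 0 < q) (hr : 0 < r) (hu : Measurable u) (hv : Measurable v)
    (hC : CSc p r q u v w k ≠ ∞) (F : Finset ℤ) {d : ℤ → ℝ≥0∞} (hd : ∀ n, d n ≠ ∞) :
    ∑ n ∈ F, 2 ^ n * normHsd p q v w k (tailQuantile u (2 ^ n)) ^ r * d n ≤
      2 ^ r * 2 * CSc p r q u v w k ^ r * (∑ n ∈ F, d n ^ (p / r)) ^ (1 / (p / r)) := by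
  have hdp : ∑ n ∈ F, (d n ^ (1 / r)) ^ p = ∑ n ∈ F, d n ^ (p / r) := by
    simp only [← ENNReal.rpow_mul, one_div_mul_eq_div]
  obtain ⟨f, hf, hfv, hfN⟩ := exists_forall_mul_normHsd_le_opSc (w := w) (k := k) hp hq hv
    (fun n : ℤ => hU.normHsd_tailQuantile_ne_top hq hr hC (2 ^ n)) F
    (e := fun n => d n ^ (1 / r)) fun n => ENNReal.rpow_ne_top_of_nonneg (by positivity) (hd n)
  rw [hdp] at hfv
  have hfv_ne_top : lpN p v f ≠ ∞ := ne_top_of_le_ne_top (ENNReal.rpow_ne_top_of_nonneg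
    (by positivity) (ENNReal.sum_ne_top.2 fun n _ => ENNReal.rpow_ne_top_of_nonneg
      (by positivity) (hd n))) hfv
  have hterm : ∀ n ∈ F, 2 ^ n * normHsd p q v w k (tailQuantile u (2 ^ n)) ^ r * d n ≤
      2 ^ r * (2 ^ n * opSc q w k f (tailQuantile u (2 ^ n)) ^ r) := fun n hn => by
    have hle := mul_le_mul_right (ENNReal.rpow_le_rpow (hfN n hn) hr.le) ((2 : ℝ≥0∞) ^ n)
    rwa [ENNReal.mul_rpow_of_nonneg _ _ hr.le, ENNReal.mul_rpow_of_nonneg _ _ hr.le, one_div,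
      ENNReal.rpow_inv_rpow hr.ne', ← mul_assoc, mul_left_comm _ (2 ^ r : ℝ≥0∞)] at hle
  calc ∑ n ∈ F, 2 ^ n * normHsd p q v w k (tailQuantile u (2 ^ n)) ^ r * d n
      ≤ 2 ^ r * ∑ n ∈ F, 2 ^ n * opSc q w k f (tailQuantile u (2 ^ n)) ^ r := by
        rw [Finset.mul_sum]
        exact Finset.sum_le_sum hterm
    _ ≤ 2 ^ r * ∑' n : ℤ, 2 ^ n * opSc q w k f (tailQuantile u (2 ^ n)) ^ r := by
        gcongr
        exact ENNReal.sum_le_tsum F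
    _ ≤ 2 ^ r * (2 * ∫⁻ x, opSc q w k f x ^ r ∂weightedMeasure u) := by
        gcongr
        exact hU.tsum_zpow_mul_tailQuantile_le
          (fun x y hxy => ENNReal.rpow_le_rpow (opSc_monotone hq.le w k f hxy) hr.le)
          (by rw [opSc_zero hq, ENNReal.zero_rpow_of_pos hr])
    _ ≤ 2 ^ r * (2 * (CSc p r q u v w k * (∑ n ∈ F, d n ^ (p / r)) ^ (1 / p)) ^ r) := by
        gcongr
        exact (lintegral_opSc_rpow_le hr hq.le hu hC hf hfv_ne_top).trans (by gcongr)
    _ = 2 ^ r * 2 * CSc p r q u v w k ^ r * (∑ n ∈ F, d n ^ (p / r)) ^ (1 / (p / r)) := by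
        rw [ENNReal.mul_rpow_of_nonneg _ _ hr.le, ← ENNReal.rpow_mul, one_div_div,
          one_div_mul_eq_div]
        ring

theorem IsTailWeight.tsum_zpow_rpow_mul_normHsd_rpow_le (hU : IsTailWeight u) (hq : 0 < q)
    (hs : s.HolderTriple p r) (hu : Measurable u) (hv : Measurable v)
    (hC : CSc p r q u v w k ≠ ∞) :
    ∑' n : ℤ, (2 ^ n) ^ (s / r) * normHsd p q v w k (tailQuantile u (2 ^ n)) ^ s ≤
      (2 ^ r * 2 * CSc p r q u v w k ^ r) ^ (s / r) := by
  have hr := hs.pos'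
  have hterm : ∀ n : ℤ, (2 ^ n * normHsd p q v w k (tailQuantile u (2 ^ n)) ^ r) ^ (s / r) =
      (2 ^ n) ^ (s / r) * normHsd p q v w k (tailQuantile u (2 ^ n)) ^ s := fun n => by
    rw [ENNReal.mul_rpow_of_nonneg _ _ (div_nonneg hs.nonneg hr.le), ← ENNReal.rpow_mul,
      mul_div_cancel₀ _ hr.ne']
  simp only [← hterm]
  refine tsum_rpow_le_of_forall_sum_mul_le hs.holderConjugate_div_div (fun n => ?_)
    fun F d hd => hU.sum_zpow_mul_normHsd_rpow_mul_le hs.symm.pos hq hr hu hv hC F hd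
  exact ENNReal.mul_ne_top (ENNReal.zpow_lt_top (by simp) (by simp) n).ne
    (ENNReal.rpow_ne_top_of_nonneg hr.le (hU.normHsd_tailQuantile_ne_top hq hr hC _))

theorem IsTailWeight.bfA2_rpow_le_tsum (hU : IsTailWeight u) (hq : 0 < q)
    (hs : s.HolderTriple p r) (hu : Measurable u) :
    bfA2 p r q u v w k ^ s ≤ 4 ^ (s / r) *
      ∑' n : ℤ, (2 ^ n) ^ (s / r) * normHsd p q v w k (tailQuantile u (2 ^ n)) ^ s := by
  have hexp : 1 + s / p = s / r := by
    have := hs.inv_add_inv_eq_inv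
    rw [div_eq_mul_inv s r, ← this, mul_add, mul_inv_cancel₀ hs.ne_zero, div_eq_mul_inv]
  have hzpow : ∀ n : ℤ, (2 : ℝ≥0∞) ^ (n + 1) = 4 * 2 ^ (n - 1) := fun n => by
    rw [show n + 1 = 2 + (n - 1) by ring, ENNReal.zpow_add (by simp) (by simp)]
    norm_num
  have hnorm : ∀ (n : ℤ) (x : ℝ), 0 < x → 2 ^ n ≤ intFrom x u →
      normHscd p q u v w k (ztInv u x) (zt u x) ^ s ≤
        normHsd p q v w k (tailQuantile u (2 ^ (n - 1))) ^ s := fun n x _ hn => by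
    refine ENNReal.rpow_le_rpow (normHscd_le_normHsd hq.le (ztInv_nonneg u x) ?_) hs.nonneg
    refine tailQuantile_le_tailQuantile (fun _ => hU.intFrom_ne_top)
      (ENNReal.zpow_pos (by simp) (by simp) _).ne' ?_
    rw [ENNReal.zpow_sub (by simp) (by simp), zpow_one, ← div_eq_mul_inv]
    exact ENNReal.div_le_div_right hn 2
  rw [bfA2_of_holderTriple hs, one_div, ENNReal.rpow_inv_rpow hs.ne_zero]
  calc _ ≤ ∑' n : ℤ, (2 ^ (n + 1)) ^ (1 + s / p) *
        normHsd p q v w k (tailQuantile u (2 ^ (n - 1))) ^ s :=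
        hU.lintegral_rpow_intFrom_mul_le hu (div_nonneg hs.nonneg hs.symm.nonneg) hnorm
    _ = 4 ^ (s / r) * ∑' n : ℤ, (2 ^ (n - 1)) ^ (s / r) *
        normHsd p q v w k (tailQuantile u (2 ^ (n - 1))) ^ s := by
        rw [← ENNReal.tsum_mul_left]
        simp only [hexp, hzpow, mul_assoc,
          ENNReal.mul_rpow_of_nonneg _ _ (div_nonneg hs.nonneg hs.nonneg')]
    _ = _ := by
        congr 1
        exact (Equiv.subRight (1 : ℤ)).tsum_eq fun n : ℤ =>
          (2 ^ n) ^ (s / r) * normHsd p q v w k (tailQuantile u (2 ^ n)) ^ s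

theorem IsTailWeight.bfA2_le_mul_CSc_of_holderTriple (hU : IsTailWeight u) (hq : 0 < q)
    (hs : s.HolderTriple p r) (hu : Measurable u) (hv : Measurable v) :
    bfA2 p r q u v w k ≤ (4 * (2 ^ r * 2)) ^ (1 / r) * CSc p r q u v w k := by
  have hr := hs.pos'
  rcases eq_or_ne (CSc p r q u v w k) ∞ with hC | hC
  · rw [hC, ENNReal.mul_top (by positivity)]
    exact le_top
  rw [← ENNReal.rpow_le_rpow_iff hs.pos]
  calc bfA2 p r q u v w k ^ s
      ≤ 4 ^ (s / r) * (2 ^ r * 2 * CSc p r q u v w k ^ r) ^ (s / r) :=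
        (hU.bfA2_rpow_le_tsum hq hs hu).trans
          (by gcongr; exact hU.tsum_zpow_rpow_mul_normHsd_rpow_le hq hs hu hv hC)
    _ = ((4 * (2 ^ r * 2)) ^ (1 / r) * CSc p r q u v w k) ^ s := by
        have hsr : 0 ≤ s / r := div_nonneg hs.nonneg hr.le
        rw [← ENNReal.mul_rpow_of_nonneg _ _ hsr, ← mul_assoc,
          ENNReal.mul_rpow_of_nonneg _ _ hsr, ENNReal.mul_rpow_of_nonneg _ _ hs.nonneg,
          ← ENNReal.rpow_mul, ← ENNReal.rpow_mul, one_div_mul_eq_div, mul_div_cancel₀ _ hr.ne']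

theorem holderTriple_of_lt (hr : 0 < r) (hrp : r < p) :
    (1 / r - 1 / p)⁻¹.HolderTriple p r where
  inv_add_inv_eq_inv := by simp
  left_pos := inv_pos.2 (sub_pos.2 (one_div_lt_one_div_of_lt hr hrp))
  right_pos := hr.trans hrp

theorem exists_bfA2_le_mul_CSc (hq : 0 < q) (hr : 0 < r) : ∃ c : ℝ≥0∞, c ≠ ∞ ∧
    ∀ u v w k, Measurable u → Measurable v → IsTailWeight u →
      bfA2 p r q u v w k ≤ c * CSc p r q u v w k := by
  rcases le_or_gt p r with hpr | hrp
  · refine ⟨1, by simp, fun u v w k _ _ hU => ?_⟩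
    rw [bfA2_of_le hpr, one_mul]
    exact iSup₂_le fun t ht => hU.intFrom_rpow_mul_normHsd_le hq hr ht
  · exact ⟨(4 * (2 ^ r * 2)) ^ (1 / r),
      by finiteness, fun u v w k hu hv hU =>
      hU.bfA2_le_mul_CSc_of_holderTriple hq (holderTriple_of_lt hr hrp) hu hv⟩

end LowerBoundTruncated

section UpperBoundSplit

variable {q r : ℝ} {D : ℝ≥0∞} {u w f : ℝ → ℝ≥0∞} {k : ℝ → ℝ → ℝ≥0∞} {x : ℝ}

/-- The part of `𝒮` at `x` in which the outer integral is restricted to `(ζ⁻¹(x), x)` and the inner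
one starts at `ζ⁻²(x)`; it is controlled by `𝐀₂`. -/
def opLocal (q : ℝ) (u w : ℝ → ℝ≥0∞) (k : ℝ → ℝ → ℝ≥0∞) (f : ℝ → ℝ≥0∞) (x : ℝ) : ℝ≥0∞ :=
  intIoo (ztInv u x) x (fun y => w y * intIoo (ztInv2 u x) y (fun z => k y z * f z) ^ q) ^ (1 / q)

theorem IsTailWeight.measurable_opA0 (hU : IsTailWeight u) (hw : Measurable w)
    (hk : Measurable (Function.uncurry k)) (hf : Measurable f) :
    Measurable (opA0 q u w k f) :=
  have hc := hU.ztInv2_monotone.measurable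
  ((measurable_intIoo (h := fun _ => w) hc measurable_id (hw.comp measurable_snd)).pow_const _).mul
    ((measurable_volterra hk hf).comp hc)

theorem IsTailWeight.measurable_opA1 (hU : IsTailWeight u) (hw : Measurable w)
    (hk : Measurable (Function.uncurry k)) : Measurable (opA1 q u w k f) :=
  have hc := hU.ztInv2_monotone.measurable
  have hwk : Measurable fun a : ℝ × ℝ => w a.2 * k a.2 (ztInv2 u a.1) ^ q :=
    (hw.comp measurable_snd).mul
      ((hk.comp (measurable_snd.prodMk (hc.comp measurable_fst))).pow_const q)
  have hint := measurable_intIoo (h := fun x y => w y * k y (ztInv2 u x) ^ q) hc measurable_id hwk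
  (hint.pow_const _).mul ((intTo_monotone f).measurable.comp hc)

theorem IsTailWeight.measurable_opLocal (hU : IsTailWeight u) (hw : Measurable w)
    (hk : Measurable (Function.uncurry k)) (hf : Measurable f) :
    Measurable (opLocal q u w k f) :=
  have hinner : Measurable fun a : ℝ × ℝ => intIoo (ztInv2 u a.1) a.2 fun z => k a.2 z * f z :=
    measurable_intIoo (X := ℝ × ℝ) (c := fun a => ztInv2 u a.1) (d := fun a => a.2)
      (h := fun a z => k a.2 z * f z) (hU.ztInv2_monotone.measurable.comp measurable_fst)
      measurable_snd
      ((hk.comp ((measurable_snd.comp measurable_fst).prodMk measurable_snd)).mul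
        (hf.comp measurable_snd))
  (measurable_intIoo (h := fun x y => w y * intIoo (ztInv2 u x) y (fun z => k y z * f z) ^ q)
    hU.ztInv_monotone.measurable measurable_id
    ((hw.comp measurable_snd).mul (hinner.pow_const q))).pow_const _

theorem add_add_rpow_le {a : ℝ} (ha : 0 ≤ a) (x y z : ℝ≥0∞) :
    (x + y + z) ^ a ≤ 3 ^ a * (x ^ a + y ^ a + z ^ a) := by
  obtain ⟨m, hm, hx, hy, hz⟩ : ∃ m, m ^ a ≤ x ^ a + y ^ a + z ^ a ∧ x ≤ m ∧ y ≤ m ∧ z ≤ m := by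
    rcases le_total (max x y) z with h | h
    · exact ⟨z, le_add_self, (le_max_left _ _).trans h, (le_max_right _ _).trans h, le_rfl⟩
    rcases le_total x y with hxy | hxy
    · exact ⟨y, le_add_self.trans le_self_add, hxy, le_rfl, by rwa [max_eq_right hxy] at h⟩
    · exact ⟨x, le_self_add.trans le_self_add, le_rfl, hxy, by rwa [max_eq_left hxy] at h⟩
  calc (x + y + z) ^ a ≤ (m + m + m) ^ a := by gcongr
    _ = 3 ^ a * m ^ a := by rw [← ENNReal.mul_rpow_of_nonneg _ _ ha]; ring_nf
    _ ≤ 3 ^ a * (x ^ a + y ^ a + z ^ a) := by gcongr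

theorem Oinarov.volterra_rpow_le (hO : Oinarov k D) (hq : 0 ≤ q) (hD1 : 1 ≤ D) (hD : D ≠ ∞)
    (hf : Measurable f) {c y : ℝ} (hcy : c ≤ y) :
    volterra k f y ^ q ≤ (D * 3) ^ q * (volterra k f c ^ q + k y c ^ q * intTo c f ^ q +
      intIoo c y (fun z => k y z * f z) ^ q) := by
  calc volterra k f y ^ q
      ≤ (D * (volterra k f c + k y c * intTo c f + intIoo c y fun z => k y z * f z)) ^ q := by
        gcongr
        rw [mul_add D (_ + _)]
        exact (hO.volterra_le_add hD hf hcy).trans (by gcongr; exact le_mul_of_one_le_left' hD1)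
    _ ≤ D ^ q * (3 ^ q * (volterra k f c ^ q + (k y c * intTo c f) ^ q +
          intIoo c y (fun z => k y z * f z) ^ q)) := by
        rw [ENNReal.mul_rpow_of_nonneg _ _ hq]
        gcongr
        exact add_add_rpow_le hq _ _ _
    _ = _ := by simp only [ENNReal.mul_rpow_of_nonneg _ _ hq, mul_assoc]

theorem IsTailWeight.intIoo_mul_volterra_rpow_le (hU : IsTailWeight u) (hO : Oinarov k D)
    (hq : 0 < q) (hD1 : 1 ≤ D) (hD : D ≠ ∞) (hw : Measurable w)
    (hk : Measurable (Function.uncurry k)) (hf : Measurable f) (x : ℝ) :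
    intIoo (ztInv u x) x (fun y => w y * volterra k f y ^ q) ≤
      (D * 3) ^ q * (opA0 q u w k f x ^ q + opA1 q u w k f x ^ q + opLocal q u w k f x ^ q) := by
  set c := ztInv2 u x with hc
  have hcz : c ≤ ztInv u x := hU.ztInv2_le_ztInv x
  have hw0 : Measurable fun y => w y * volterra k f c ^ q := hw.mul_const _
  have hwk : Measurable fun y => w y * k y c ^ q := hw.mul (hk.of_uncurry_right.pow_const q)
  have hsum : Measurable fun y => w y * volterra k f c ^ q + w y * k y c ^ q * intTo c f ^ q :=
    hw0.add (hwk.mul_const _)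
  have hK : (D * 3) ^ q ≠ ∞ := by finiteness
  calc intIoo (ztInv u x) x (fun y => w y * volterra k f y ^ q)
      ≤ ∫⁻ y in Ioo (ztInv u x) x, (D * 3) ^ q * (w y * volterra k f c ^ q +
          w y * k y c ^ q * intTo c f ^ q + w y * intIoo c y (fun z => k y z * f z) ^ q) := by
        refine setLIntegral_mono' measurableSet_Ioo fun y hy => ?_
        rw [mul_assoc (w y) (k y c ^ q), ← mul_add, ← mul_add, mul_left_comm]
        gcongr
        exact hO.volterra_rpow_le hq.le hD1 hD hf (hcz.trans hy.1.le)
    _ = (D * 3) ^ q * (intIoo (ztInv u x) x w * volterra k f c ^ q +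
          intIoo (ztInv u x) x (fun y => w y * k y c ^ q) * intTo c f ^ q +
          opLocal q u w k f x ^ q) := by
        rw [lintegral_const_mul' _ _ hK, lintegral_add_left hsum,
          lintegral_add_left hw0, lintegral_mul_const _ hw, lintegral_mul_const _ hwk, opLocal,
          one_div, ENNReal.rpow_inv_rpow hq.ne']
        rfl
    _ ≤ _ := by
        simp only [opA0, opA1, ENNReal.mul_rpow_of_nonneg _ _ hq.le, one_div,
          ENNReal.rpow_inv_rpow hq.ne', ← hc]
        gcongr <;> exact intIoo_mono_endpoints _ hcz le_rfl

theorem exists_lpN_opSc_rpow_le (hq : 0 < q) (hr : 0 < r) (hD1 : 1 ≤ D) (hD : D ≠ ∞) :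
    ∃ C : ℝ≥0∞, C ≠ ∞ ∧ ∀ u w k f, Measurable u → Measurable w →
      Measurable (Function.uncurry k) → IsTailWeight u → Oinarov k D → Measurable f →
      lpN r u (opSc q w k f) ^ r ≤ C * (lpN r u (opA0 q u w k f) ^ r +
        lpN r u (opA1 q u w k f) ^ r + lpN r u (opLocal q u w k f) ^ r) := by
  have hrq : 0 < r / q := by positivity
  obtain ⟨C, hC, hblock⟩ := exists_lintegral_intTo_rpow_le hrq
  refine ⟨C * (((D * 3) ^ q) ^ (r / q) * 3 ^ (r / q)), by finiteness,
    fun u w k f hu hw hk hU hO hf => ?_⟩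
  have h0 : Measurable (opA0 q u w k f) := hU.measurable_opA0 hw hk hf
  have h1 : Measurable (opA1 q u w k f) := hU.measurable_opA1 hw hk
  have hloc : Measurable (opLocal q u w k f) := hU.measurable_opLocal hw hk hf
  have h01 : Measurable fun x => opA0 q u w k f x ^ r + opA1 q u w k f x ^ r :=
    (h0.pow_const r).add (h1.pow_const r)
  have hroot : ∀ t : ℝ≥0∞, (t ^ q) ^ (r / q) = t ^ r := fun t => by
    rw [← ENNReal.rpow_mul, mul_div_cancel₀ _ hq.ne']
  have hpt : ∀ x, intIoo (ztInv u x) x (fun y => w y * volterra k f y ^ q) ^ (r / q) ≤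
      ((D * 3) ^ q) ^ (r / q) * 3 ^ (r / q) *
        (opA0 q u w k f x ^ r + opA1 q u w k f x ^ r + opLocal q u w k f x ^ r) := fun x => by
    refine (ENNReal.rpow_le_rpow (hU.intIoo_mul_volterra_rpow_le hO hq hD1 hD hw hk hf x)
      hrq.le).trans ?_
    rw [ENNReal.mul_rpow_of_nonneg _ _ hrq.le, mul_assoc]
    gcongr
    simpa only [hroot] using add_add_rpow_le hrq.le (opA0 q u w k f x ^ q)
      (opA1 q u w k f x ^ q) (opLocal q u w k f x ^ q)
  calc lpN r u (opSc q w k f) ^ r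
      = ∫⁻ x, intTo x (fun y => w y * volterra k f y ^ q) ^ (r / q) ∂weightedMeasure u := by
        rw [lpN_rpow_eq_lintegral hr.ne' hu (opSc_monotone hq.le w k f).measurable]
        simp only [opSc_eq_volterra, ← ENNReal.rpow_mul, one_div_mul_eq_div]
    _ ≤ C * ∫⁻ x, ((D * 3) ^ q) ^ (r / q) * 3 ^ (r / q) * (opA0 q u w k f x ^ r +
          opA1 q u w k f x ^ r + opLocal q u w k f x ^ r) ∂weightedMeasure u :=
        (hblock u _ hU (hw.mul ((measurable_volterra hk hf).pow_const q))).trans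
          (by gcongr with x; exact hpt x)
    _ = _ := by
        rw [lintegral_const_mul' _ _ (by finiteness), lintegral_add_left h01,
          lintegral_add_left (h0.pow_const r), lpN_rpow_eq_lintegral hr.ne' hu h0,
          lpN_rpow_eq_lintegral hr.ne' hu h1, lpN_rpow_eq_lintegral hr.ne' hu hloc, mul_assoc C]

end UpperBoundSplit

section LocalPart

variable {p q r s : ℝ} {u v w f : ℝ → ℝ≥0∞} {k : ℝ → ℝ → ℝ≥0∞} {x : ℝ}

theorem lintegral_intTo_weightedMeasure (u : ℝ → ℝ≥0∞) {g : ℝ → ℝ≥0∞} (hg : Measurable g) :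
    ∫⁻ x, intTo x g ∂weightedMeasure u = ∫⁻ z in Ioi 0, intFrom z u * g z := by
  have : SFinite (weightedMeasure u) := by
    unfold weightedMeasure
    infer_instance
  have hmeas : Measurable (Function.uncurry fun x z : ℝ => (Iio x).indicator g z) :=
    (hg.comp measurable_snd).indicator (measurableSet_lt measurable_snd measurable_fst)
  have hinner : ∀ x, intTo x g = ∫⁻ z in Ioi 0, (Iio x).indicator g z := fun x => by
    rw [lintegral_indicator measurableSet_Iio, Measure.restrict_restrict measurableSet_Iio,
      inter_comm, Ioi_inter_Iio, intTo]
  simp only [hinner]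
  rw [lintegral_lintegral_swap hmeas.aemeasurable]
  refine setLIntegral_congr_fun measurableSet_Ioi fun z hz => ?_
  calc ∫⁻ x, (Iio x).indicator g z ∂weightedMeasure u
      = ∫⁻ x, (Ioi z).indicator (fun _ => g z) x ∂weightedMeasure u := rfl
    _ = intFrom z u * g z := by
        rw [lintegral_indicator_const measurableSet_Ioi, weightedMeasure_Ioi u (le_of_lt hz),
          mul_comm]

theorem IsTailWeight.lintegral_inv_intFrom_mul_intIoo_le (hU : IsTailWeight u)
    {h : ℝ → ℝ≥0∞} (hh : Measurable h) :
    ∫⁻ x, (intFrom x u)⁻¹ * intIoo (ztInv2 u x) x h ∂weightedMeasure u ≤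
      4 * ∫⁻ z in Ioi 0, h z := by
  have hUm : Measurable fun z => intFrom z u := (intFrom_antitone u).measurable
  have hpt : ∀ x, (intFrom x u)⁻¹ * intIoo (ztInv2 u x) x h ≤
      intTo x fun z => 4 * (intFrom z u)⁻¹ * h z := fun x => by
    calc (intFrom x u)⁻¹ * intIoo (ztInv2 u x) x h
        = ∫⁻ z in Ioo (ztInv2 u x) x, (intFrom x u)⁻¹ * h z :=
          (lintegral_const_mul' _ _ (ENNReal.inv_ne_top.2 (hU.intFrom_ne_zero x))).symm
      _ ≤ intIoo (ztInv2 u x) x fun z => 4 * (intFrom z u)⁻¹ * h z := by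
          refine setLIntegral_mono' measurableSet_Ioo fun z hz => ?_
          gcongr
          rw [ENNReal.inv_le_iff_inv_le, ENNReal.mul_inv (by simp) (by simp), inv_inv,
            ENNReal.inv_mul_le_iff (by simp) (by simp)]
          exact hU.intFrom_le_of_ztInv2_lt hz.1
      _ ≤ _ := intIoo_le_intTo _ (ztInv2_nonneg u x) x
  calc _ ≤ ∫⁻ x, intTo x (fun z => 4 * (intFrom z u)⁻¹ * h z) ∂weightedMeasure u :=
        lintegral_mono hpt
    _ = ∫⁻ z in Ioi 0, intFrom z u * (4 * (intFrom z u)⁻¹ * h z) :=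
        lintegral_intTo_weightedMeasure u ((hUm.inv.const_mul 4).mul hh)
    _ = ∫⁻ z in Ioi 0, 4 * h z := by
        refine setLIntegral_congr_fun measurableSet_Ioi fun z hz => ?_
        rw [← mul_assoc, mul_left_comm,
          ENNReal.mul_inv_cancel (hU.intFrom_ne_zero z) (hU.intFrom_ne_top hz), mul_one]
    _ = _ := lintegral_const_mul' _ _ (by simp)

/-- The norm in `L^p_v` of the restriction of `f` to `(ζ⁻²(x), x)`, the part of `f` on which
the local part of `𝒮` depends at `x`. -/
def localNorm (p : ℝ) (u v f : ℝ → ℝ≥0∞) (x : ℝ) : ℝ≥0∞ :=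
  lpN p v ((Ioo (ztInv2 u x) x).indicator f)

theorem localNorm_le (hp : 0 ≤ p) (u v f : ℝ → ℝ≥0∞) (x : ℝ) :
    localNorm p u v f x ≤ lpN p v f :=
  lpN_mono hp (indicator_le_self _ f)

theorem localNorm_eq_intIoo (hp : 0 < p) (u v f : ℝ → ℝ≥0∞) (x : ℝ) :
    localNorm p u v f x = intIoo (ztInv2 u x) x (fun z => f z ^ p * v z) ^ (1 / p) := by
  have hpow : ∀ z, (Ioo (ztInv2 u x) x).indicator f z ^ p * v z =
      (Ioo (ztInv2 u x) x).indicator (fun z => f z ^ p * v z) z := fun z => by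
    by_cases hz : z ∈ Ioo (ztInv2 u x) x <;> simp [hz, hp]
  simp only [localNorm, lpN, hpow]
  rw [lintegral_indicator measurableSet_Ioo, Measure.restrict_restrict measurableSet_Ioo,
    inter_eq_left.2 fun z hz => mem_Ioi.2 ((ztInv2_nonneg u x).trans_lt hz.1), intIoo]

theorem IsTailWeight.measurable_localNorm (hU : IsTailWeight u) (hp : 0 < p) (hv : Measurable v)
    (hf : Measurable f) : Measurable (localNorm p u v f) := by
  simp only [funext (localNorm_eq_intIoo hp u v f)]
  exact (measurable_intIoo (h := fun _ z => f z ^ p * v z) hU.ztInv2_monotone.measurable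
    measurable_id (((hf.pow_const p).mul hv).comp measurable_snd)).pow_const _

theorem IsTailWeight.lintegral_inv_intFrom_mul_localNorm_rpow_le (hU : IsTailWeight u)
    (hp : 0 < p) (hv : Measurable v) (hf : Measurable f) :
    ∫⁻ x, (intFrom x u)⁻¹ * localNorm p u v f x ^ p ∂weightedMeasure u ≤ 4 * lpN p v f ^ p := by
  simp only [localNorm_eq_intIoo hp, one_div, ENNReal.rpow_inv_rpow hp.ne', lpN_rpow hp.ne']
  exact hU.lintegral_inv_intFrom_mul_intIoo_le ((hf.pow_const p).mul hv)

theorem IsTailWeight.opLocal_le_lpN_calHscd (hU : IsTailWeight u) (hq : 0 ≤ q) (hx : 0 < x) :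
    opLocal q u w k f x ≤
      lpN q w (calHscd u k (ztInv u x) (zt u x) ((Ioo (ztInv2 u x) x).indicator f)) := by
  refine ENNReal.rpow_le_rpow ?_ (by positivity)
  refine le_trans (setLIntegral_mono' measurableSet_Ioo fun y hy => ?_)
    (lintegral_mono_set fun y hy => (ztInv_nonneg u x).trans_lt hy.1)
  rw [mul_comm, calHscd, if_pos ⟨hy.1, hy.2.le.trans (hU.le_zt hx)⟩]
  gcongr
  refine setLIntegral_mono' measurableSet_Ioo fun z hz => ?_
  rw [indicator_of_mem (show z ∈ Ioo (ztInv2 u x) x from ⟨hz.1, hz.2.trans hy.2⟩)]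

theorem IsTailWeight.opLocal_le_normHscd_mul (hU : IsTailWeight u) (hp : 0 ≤ p) (hq : 0 ≤ q)
    (hf : Measurable f) (hfv : lpN p v f ≠ ∞) (hx : 0 < x)
    (hN : normHscd p q u v w k (ztInv u x) (zt u x) ≠ ∞) :
    opLocal q u w k f x ≤
      normHscd p q u v w k (ztInv u x) (zt u x) * localNorm p u v f x :=
  (hU.opLocal_le_lpN_calHscd hq hx).trans
    (le_leastC_mul (Φ := fun f => lpN q w (calHscd u k (ztInv u x) (zt u x) f)) hN
      (hf.indicator measurableSet_Ioo) (ne_top_of_le_ne_top hfv (localNorm_le hp u v f x)))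

theorem IsTailWeight.intFrom_mul_normHscd_rpow_le (hU : IsTailWeight u) (hq : 0 ≤ q) (hr : 0 < r)
    (hpr : p ≤ r) (hx : 0 < x) :
    intFrom x u * normHscd p q u v w k (ztInv u x) (zt u x) ^ r ≤ 2 * bfA2 p r q u v w k ^ r := by
  have hzt : 0 < zt u x := hx.trans_le (hU.le_zt hx)
  have hhalf : intFrom x u ≤ 2 * intFrom (zt u x) u := by
    rw [mul_comm, ← ENNReal.div_le_iff_le_mul (by simp) (by simp)]
    exact le_intFrom_tailQuantile (fun _ => hU.intFrom_ne_top) hzt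
  have hA : intFrom (zt u x) u ^ (1 / r) * normHsd p q v w k (zt u x) ≤ bfA2 p r q u v w k := by
    rw [bfA2_of_le hpr]
    exact le_iSup₂_of_le (zt u x) hzt le_rfl
  calc intFrom x u * normHscd p q u v w k (ztInv u x) (zt u x) ^ r
      ≤ 2 * intFrom (zt u x) u * normHsd p q v w k (zt u x) ^ r := by
        gcongr
        exact normHscd_le_normHsd hq (ztInv_nonneg u x) le_rfl
    _ = 2 * (intFrom (zt u x) u ^ (1 / r) * normHsd p q v w k (zt u x)) ^ r := by
        rw [ENNReal.mul_rpow_of_nonneg _ _ hr.le, one_div, ENNReal.rpow_inv_rpow hr.ne', mul_assoc]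
    _ ≤ _ := by gcongr

theorem IsTailWeight.opLocal_rpow_le (hU : IsTailWeight u) (hp : 0 < p) (hq : 0 ≤ q)
    (hpr : p ≤ r) (hf : Measurable f) (hA : bfA2 p r q u v w k ≠ ∞) (hfv : lpN p v f ≠ ∞)
    (hx : 0 < x) :
    opLocal q u w k f x ^ r ≤ 2 * bfA2 p r q u v w k ^ r * lpN p v f ^ (r - p) *
      ((intFrom x u)⁻¹ * localNorm p u v f x ^ p) := by
  have hr : 0 < r := hp.trans_le hpr
  have hpr0 : 0 ≤ r - p := sub_nonneg.2 hpr
  set A := bfA2 p r q u v w k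
  set N := normHscd p q u v w k (ztInv u x) (zt u x)
  set L := localNorm p u v f x
  have hNA : N ^ r ≤ (intFrom x u)⁻¹ * (2 * A ^ r) :=
    (ENNReal.mul_le_iff_le_inv (hU.intFrom_ne_zero x) (hU.intFrom_ne_top hx)).1
      (hU.intFrom_mul_normHscd_rpow_le hq hr hpr hx)
  have hN : N ≠ ∞ := fun htop => by
    have hinv : (intFrom x u)⁻¹ ≠ ∞ := ENNReal.inv_ne_top.2 (hU.intFrom_ne_zero x)
    rw [htop, ENNReal.top_rpow_of_pos hr, top_le_iff] at hNA
    exact (show (intFrom x u)⁻¹ * (2 * A ^ r) ≠ ∞ by finiteness) hNA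
  calc opLocal q u w k f x ^ r ≤ (N * L) ^ r := by
        gcongr
        exact hU.opLocal_le_normHscd_mul hp.le hq hf hfv hx hN
    _ = N ^ r * (L ^ p * L ^ (r - p)) := by
        rw [ENNReal.mul_rpow_of_nonneg _ _ hr.le, ← ENNReal.rpow_add_of_nonneg _ _ hp.le hpr0,
          add_sub_cancel]
    _ ≤ (intFrom x u)⁻¹ * (2 * A ^ r) * (L ^ p * lpN p v f ^ (r - p)) := by
        gcongr
        exact localNorm_le hp.le u v f x
    _ = _ := by ring

theorem IsTailWeight.lpN_opLocal_rpow_le (hU : IsTailWeight u) (hp : 0 < p) (hq : 0 ≤ q)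
    (hpr : p ≤ r) (hu : Measurable u) (hv : Measurable v) (hw : Measurable w)
    (hk : Measurable (Function.uncurry k)) (hf : Measurable f) (hA : bfA2 p r q u v w k ≠ ∞)
    (hfv : lpN p v f ≠ ∞) :
    lpN r u (opLocal q u w k f) ^ r ≤ 8 * (bfA2 p r q u v w k * lpN p v f) ^ r := by
  have hr : 0 < r := hp.trans_le hpr
  have hpr0 : 0 ≤ r - p := sub_nonneg.2 hpr
  set A := bfA2 p r q u v w k
  set P := lpN p v f
  rw [lpN_rpow_eq_lintegral hr.ne' hu (hU.measurable_opLocal hw hk hf)]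
  calc _ ≤ ∫⁻ x, 2 * A ^ r * P ^ (r - p) * ((intFrom x u)⁻¹ * localNorm p u v f x ^ p)
        ∂weightedMeasure u :=
        lintegral_mono_ae ((ae_weightedMeasure_pos u).mono fun x hx =>
          hU.opLocal_rpow_le hp hq hpr hf hA hfv hx)
    _ ≤ 2 * A ^ r * P ^ (r - p) * (4 * P ^ p) := by
        rw [lintegral_const_mul' _ _ (by finiteness)]
        gcongr
        exact hU.lintegral_inv_intFrom_mul_localNorm_rpow_le hp hv hf
    _ = 2 * 4 * (A ^ r * (P ^ (r - p) * P ^ p)) := by ring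
    _ = 8 * (A * P) ^ r := by
        rw [← ENNReal.rpow_add_of_nonneg _ _ hpr0 hp.le, sub_add_cancel,
          ENNReal.mul_rpow_of_nonneg _ _ hr.le]
        norm_num

theorem lpN_mul_le_of_holderTriple (hs : s.HolderTriple p r) (hu : Measurable u)
    {g h : ℝ → ℝ≥0∞} (hg : Measurable g) (hh : Measurable h) :
    lpN r u (fun x => g x * h x) ≤ lpN s u g * lpN p u h := by
  have hgh : Measurable fun x => g x * h x := hg.mul hh
  rw [lpN_eq_lintegral hs.pos' hu hgh, lpN_eq_lintegral hs.pos hu hg,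
    lpN_eq_lintegral hs.symm.pos hu hh]
  exact ENNReal.lintegral_Lp_mul_le_Lq_mul_Lr hs.pos' hs.lt hs.one_div_eq _ hg.aemeasurable
    hh.aemeasurable

theorem lpN_intFrom_rpow_mul_le_bfA2 (hs : s.HolderTriple p r) {M : ℝ → ℝ≥0∞}
    (hM : ∀ x, 0 < x → M x ≤ normHscd p q u v w k (ztInv u x) (zt u x)) :
    lpN s u (fun x => intFrom x u ^ (1 / p) * M x) ≤ bfA2 p r q u v w k := by
  have hs0 : 0 ≤ s := hs.nonneg
  rw [bfA2_of_holderTriple hs]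
  refine ENNReal.rpow_le_rpow (setLIntegral_mono' measurableSet_Ioi fun x hx => ?_) (by positivity)
  rw [ENNReal.mul_rpow_of_nonneg _ _ hs0, ← ENNReal.rpow_mul, one_div_mul_eq_div, mul_comm,
    ← mul_assoc]
  gcongr
  exact hM x hx

theorem IsTailWeight.lpN_inv_intFrom_rpow_mul_localNorm_le (hU : IsTailWeight u) (hp : 0 < p)
    (hu : Measurable u) (hv : Measurable v) (hf : Measurable f) :
    lpN p u (fun x => (intFrom x u)⁻¹ ^ (1 / p) * localNorm p u v f x) ≤
      4 ^ (1 / p) * lpN p v f := by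
  have hUm : Measurable fun x => (intFrom x u)⁻¹ := (intFrom_antitone u).measurable.inv
  have hL : Measurable (localNorm p u v f) := hU.measurable_localNorm hp hv hf
  have hUL : Measurable fun x => (intFrom x u)⁻¹ ^ (1 / p) * localNorm p u v f x :=
    (hUm.pow_const _).mul hL
  rw [lpN_eq_lintegral hp hu hUL]
  simp only [ENNReal.mul_rpow_of_nonneg _ _ hp.le, one_div, ENNReal.rpow_inv_rpow hp.ne']
  calc _ ≤ (4 * lpN p v f ^ p) ^ p⁻¹ := by
        gcongr
        exact hU.lintegral_inv_intFrom_mul_localNorm_rpow_le hp hv hf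
    _ = _ := by
        rw [ENNReal.mul_rpow_of_nonneg _ _ (by positivity), ENNReal.rpow_rpow_inv hp.ne']

theorem le_rpow_mul_div_mul_inv_rpow_mul {a b t : ℝ≥0∞} (ht0 : t ≠ 0) (ht : t ≠ ∞) {c : ℝ}
    (hc : 0 ≤ c) (hb : b ≠ ∞) (hfin : t ^ c * (a / b) ≠ ∞) :
    a ≤ t ^ c * (a / b) * (t⁻¹ ^ c * b) := by
  have ht0' : t ^ c ≠ 0 := (ENNReal.rpow_pos (pos_iff_ne_zero.2 ht0) ht).ne'
  have ht' : t ^ c ≠ ∞ := ENNReal.rpow_ne_top_of_nonneg hc ht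
  have hab : a / b ≠ ∞ := fun htop => hfin (by rw [htop, ENNReal.mul_top ht0'])
  calc a ≤ a / b * b := (ENNReal.div_le_iff_le_mul (.inr hab) (.inl hb)).1 le_rfl
    _ = t ^ c * (a / b) * (t⁻¹ ^ c * b) := by
        rw [ENNReal.inv_rpow, mul_mul_mul_comm, ENNReal.mul_inv_cancel ht0' ht', one_mul]

theorem IsTailWeight.lpN_opLocal_le_of_holderTriple (hU : IsTailWeight u) (hq : 0 ≤ q)
    (hs : s.HolderTriple p r) (hu : Measurable u) (hv : Measurable v) (hw : Measurable w)
    (hk : Measurable (Function.uncurry k)) (hf : Measurable f) (hA : bfA2 p r q u v w k ≠ ∞)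
    (hfv : lpN p v f ≠ ∞) :
    lpN r u (opLocal q u w k f) ≤ 4 ^ (1 / p) * (bfA2 p r q u v w k * lpN p v f) := by
  have hp : 0 < p := hs.symm.pos
  set L := localNorm p u v f
  -- The norm of `ℋ*_{c,d}` need not be measurable in `c` and `d`, so Hölder's inequality is applied
  -- to this measurable minorant of it.
  let M : ℝ → ℝ≥0∞ := fun x => opLocal q u w k f x / L x
  let g : ℝ → ℝ≥0∞ := fun x => intFrom x u ^ (1 / p) * M x
  let h : ℝ → ℝ≥0∞ := fun x => (intFrom x u)⁻¹ ^ (1 / p) * L x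
  have hUm : Measurable fun x => intFrom x u := (intFrom_antitone u).measurable
  have hL : Measurable L := hU.measurable_localNorm hp hv hf
  have hloc : Measurable (opLocal q u w k f) := hU.measurable_opLocal hw hk hf
  have hg : Measurable g := (hUm.pow_const _).mul (hloc.div hL)
  have hh : Measurable h := (hUm.inv.pow_const _).mul hL
  have hgA : lpN s u g ≤ bfA2 p r q u v w k :=
    lpN_intFrom_rpow_mul_le_bfA2 hs fun x hx => by
      rcases eq_or_ne (normHscd p q u v w k (ztInv u x) (zt u x)) ∞ with hN | hN
      · exact hN ▸ le_top
      · exact ENNReal.div_le_of_le_mul (hU.opLocal_le_normHscd_mul hp.le hq hf hfv hx hN)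
  have hfact : ∀ᵐ x ∂weightedMeasure u, opLocal q u w k f x ≤ g x * h x := by
    filter_upwards [ae_weightedMeasure_pos u,
      ae_lt_top_of_lpN_ne_top hs.pos hu hg (ne_top_of_le_ne_top hA hgA)] with x hx hgx
    exact le_rpow_mul_div_mul_inv_rpow_mul (hU.intFrom_ne_zero x) (hU.intFrom_ne_top hx)
      (by positivity) (ne_top_of_le_ne_top hfv (localNorm_le hp.le u v f x)) hgx.ne
  calc lpN r u (opLocal q u w k f) ≤ lpN r u fun x => g x * h x :=
        lpN_mono_ae hs.pos' hu hloc (hg.mul hh) hfact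
    _ ≤ lpN s u g * lpN p u h := lpN_mul_le_of_holderTriple hs hu hg hh
    _ ≤ bfA2 p r q u v w k * (4 ^ (1 / p) * lpN p v f) :=
        mul_le_mul' hgA (hU.lpN_inv_intFrom_rpow_mul_localNorm_le hp hu hv hf)
    _ = _ := mul_left_comm _ _ _

theorem exists_lpN_opLocal_rpow_le (hp : 0 < p) (hq : 0 ≤ q) (hr : 0 < r) :
    ∃ K : ℝ≥0∞, K ≠ ∞ ∧ ∀ u v w k f, Measurable u → Measurable v → Measurable w →
      Measurable (Function.uncurry k) → IsTailWeight u → Measurable f →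
      bfA2 p r q u v w k ≠ ∞ → lpN p v f ≠ ∞ →
      lpN r u (opLocal q u w k f) ^ r ≤ K * (bfA2 p r q u v w k * lpN p v f) ^ r := by
  rcases le_or_gt p r with hpr | hrp
  · exact ⟨8, by simp, fun u v w k f hu hv hw hk hU hf hA hfv =>
      hU.lpN_opLocal_rpow_le hp hq hpr hu hv hw hk hf hA hfv⟩
  · refine ⟨(4 ^ (1 / p)) ^ r, by finiteness, fun u v w k f hu hv hw hk hU hf hA hfv => ?_⟩
    rw [← ENNReal.mul_rpow_of_nonneg _ _ hr.le]
    gcongr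
    exact hU.lpN_opLocal_le_of_holderTriple hq (holderTriple_of_lt hr hrp) hu hv hw hk hf hA hfv

end LocalPart

section Equivalence

variable {p q r : ℝ} {D : ℝ≥0∞}

theorem exists_lpN_opSc_le (hp : 0 < p) (hq : 0 < q) (hr : 0 < r) (hD1 : 1 ≤ D) (hD : D ≠ ∞) :
    ∃ c : ℝ≥0∞, c ≠ ∞ ∧ ∀ u v w k f, Measurable u → Measurable v → Measurable w →
      Measurable (Function.uncurry k) → IsTailWeight u → Oinarov k D → Measurable f →
      bfA0 p r q u v w k + bfA1 p r q u v w k + bfA2 p r q u v w k ≠ ∞ → lpN p v f ≠ ∞ →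
      lpN r u (opSc q w k f) ≤
        c * ((bfA0 p r q u v w k + bfA1 p r q u v w k + bfA2 p r q u v w k) * lpN p v f) := by
  obtain ⟨C, hC, hsplit⟩ := exists_lpN_opSc_rpow_le hq hr hD1 hD
  obtain ⟨K, hK, hlocal⟩ := exists_lpN_opLocal_rpow_le hp hq.le hr
  refine ⟨(C * (1 + 1 + K)) ^ r⁻¹, by finiteness,
    fun u v w k f hu hv hw hk hU hO hf hS hfv => ?_⟩
  set S := bfA0 p r q u v w k + bfA1 p r q u v w k + bfA2 p r q u v w k
  have hA0S : bfA0 p r q u v w k ≤ S := le_self_add.trans le_self_add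
  have hA1S : bfA1 p r q u v w k ≤ S := le_add_self.trans le_self_add
  have hA2S : bfA2 p r q u v w k ≤ S := le_add_self
  have h0 : lpN r u (opA0 q u w k f) ≤ bfA0 p r q u v w k * lpN p v f := by
    have htop := ne_top_of_le_ne_top hS hA0S
    rw [bfA0_eq_leastC hr.le] at htop ⊢
    exact le_leastC_mul (Φ := fun f => lpN r u (opA0 q u w k f)) htop hf hfv
  have h1 : lpN r u (opA1 q u w k f) ≤ bfA1 p r q u v w k * lpN p v f := by
    have htop := ne_top_of_le_ne_top hS hA1S
    rw [bfA1_eq_leastC hr.le] at htop ⊢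
    exact le_leastC_mul (Φ := fun f => lpN r u (opA1 q u w k f)) htop hf hfv
  rw [← ENNReal.rpow_le_rpow_iff hr]
  calc lpN r u (opSc q w k f) ^ r
      ≤ C * (lpN r u (opA0 q u w k f) ^ r + lpN r u (opA1 q u w k f) ^ r
          + lpN r u (opLocal q u w k f) ^ r) := hsplit u w k f hu hw hk hU hO hf
    _ ≤ C * ((S * lpN p v f) ^ r + (S * lpN p v f) ^ r + K * (S * lpN p v f) ^ r) := by
        gcongr
        · exact h0.trans (by gcongr)
        · exact h1.trans (by gcongr)
        · exact (hlocal u v w k f hu hv hw hk hU hf (ne_top_of_le_ne_top hS hA2S) hfv).trans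
            (by gcongr)
    _ = ((C * (1 + 1 + K)) ^ r⁻¹ * (S * lpN p v f)) ^ r := by
        rw [ENNReal.mul_rpow_of_nonneg _ (S * _) hr.le, ENNReal.rpow_inv_rpow hr.ne']
        ring

theorem exists_CSc_le_mul (hp : 0 < p) (hq : 0 < q) (hr : 0 < r) (hD1 : 1 ≤ D) (hD : D ≠ ∞) :
    ∃ c : ℝ≥0∞, 0 < c ∧ c ≠ ∞ ∧ ∀ u v w k, Measurable u → Measurable v → Measurable w →
      Measurable (Function.uncurry k) → IsTailWeight u → Oinarov k D →
      CSc p r q u v w k ≤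
        c * (bfA0 p r q u v w k + bfA1 p r q u v w k + bfA2 p r q u v w k) := by
  obtain ⟨c, hc, hle⟩ := exists_lpN_opSc_le hp hq hr hD1 hD
  refine ⟨c + 1, by positivity, by finiteness, fun u v w k hu hv hw hk hU hO => ?_⟩
  set S := bfA0 p r q u v w k + bfA1 p r q u v w k + bfA2 p r q u v w k
  rcases eq_or_ne S ∞ with htop | htop
  · rw [htop, ENNReal.mul_top (by positivity)]
    exact le_top
  · refine leastC_le_of_ne_top fun f hf hfv => ?_
    rw [mul_assoc]
    exact (hle u v w k f hu hv hw hk hU hO hf htop hfv).trans (by gcongr; exact le_self_add)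

theorem exists_le_mul_CSc (hq : 0 < q) (hr : 0 < r) (hD0 : 0 < D) (hD : D ≠ ∞) :
    ∃ c : ℝ≥0∞, 0 < c ∧ c ≠ ∞ ∧ ∀ u v w k, Measurable u → Measurable v → IsTailWeight u →
      Oinarov k D →
      bfA0 p r q u v w k + bfA1 p r q u v w k + bfA2 p r q u v w k ≤ c * CSc p r q u v w k := by
  obtain ⟨c, hc, hA2⟩ := exists_bfA2_le_mul_CSc (p := p) hq hr
  refine ⟨D + D + c, by positivity, by finiteness, fun u v w k hu hv hU hO => ?_⟩
  rw [add_mul, add_mul]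
  exact add_le_add (add_le_add (bfA0_le_mul_CSc hq hr hD0.ne' hD hO)
    (bfA1_le_mul_CSc hq hr hD0.ne' hD hO)) (hA2 u v w k hu hv hU)

end Equivalence

theorem statement4_general (p r q : ℝ) (D : ℝ≥0∞)
    (hp : 0 < p) (hr : 0 < r) (hq : 0 < q) (hD1 : 1 ≤ D) (hD : D ≠ ∞) :
    ∃ c₁ c₂ : ℝ≥0∞, 0 < c₁ ∧ c₁ ≠ ∞ ∧ 0 < c₂ ∧ c₂ ≠ ∞ ∧
      ∀ (u v w : ℝ → ℝ≥0∞) (k : ℝ → ℝ → ℝ≥0∞),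
        Measurable u → Measurable v → Measurable w →
        Measurable (Function.uncurry k) →
        (∀ t : ℝ, 0 < t → intFrom t u ≠ 0 ∧ intFrom t u ≠ ∞) →
        Oinarov k D →
        (CSc p r q u v w k < ∞ ↔
            bfA0 p r q u v w k + bfA1 p r q u v w k + bfA2 p r q u v w k < ∞) ∧
        CSc p r q u v w k ≤
            c₁ * (bfA0 p r q u v w k + bfA1 p r q u v w k + bfA2 p r q u v w k) ∧
        bfA0 p r q u v w k + bfA1 p r q u v w k + bfA2 p r q u v w k ≤
            c₂ * CSc p r q u v w k := by
  obtain ⟨c₁, hc₁, hc₁top, hupper⟩ := exists_CSc_le_mul hp hq hr hD1 hD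
  obtain ⟨c₂, hc₂, hc₂top, hlower⟩ := exists_le_mul_CSc (p := p) hq hr (one_pos.trans_le hD1) hD
  refine ⟨c₁, c₂, hc₁, hc₁top, hc₂, hc₂top, fun u v w k hu hv hw hk hU hO => ?_⟩
  have hle := hupper u v w k hu hv hw hk hU hO
  have hge := hlower u v w k hu hv hU hO
  exact ⟨⟨fun h => hge.trans_lt (ENNReal.mul_lt_top hc₂top.lt_top h),
    fun h => hle.trans_lt (ENNReal.mul_lt_top hc₁top.lt_top h)⟩, hle, hge⟩

theorem statement4 (p r q : ℝ) (D : ℝ≥0∞)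
    (hp : 1 ≤ p) (hr : 0 < r) (hq : 0 < q) (hD1 : 1 ≤ D) (hD : D ≠ ∞) :
    ∃ c₁ c₂ : ℝ≥0∞, 0 < c₁ ∧ c₁ ≠ ∞ ∧ 0 < c₂ ∧ c₂ ≠ ∞ ∧
      ∀ (u v w : ℝ → ℝ≥0∞) (k : ℝ → ℝ → ℝ≥0∞),
        Measurable u → Measurable v → Measurable w →
        Measurable (Function.uncurry k) →
        (∀ t : ℝ, 0 < t → intFrom t u ≠ 0 ∧ intFrom t u ≠ ∞) →
        Oinarov k D →
        (CSc p r q u v w k < ∞ ↔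
            bfA0 p r q u v w k + bfA1 p r q u v w k + bfA2 p r q u v w k < ∞) ∧
        CSc p r q u v w k ≤
            c₁ * (bfA0 p r q u v w k + bfA1 p r q u v w k + bfA2 p r q u v w k) ∧
        bfA0 p r q u v w k + bfA1 p r q u v w k + bfA2 p r q u v w k ≤
            c₂ * CSc p r q u v w k := by
  exact statement4_general p r q D (one_pos.trans_le hp) hr hq hD1 hD

end
end

section
/- Let 1 ≤ p < ∞, r = ∞, 0 < q ≤ ∞, let u, v, w ∈ 𝔐⁺ be weights and let k(x,y) ≥ 0 be a Borel kernel on [0,∞)² with k(x,y) = 0 for x < y. Define (Tf)(x) := (∫ₓ^∞ w(y)(∫₀ʸ k(y,z)f(z)dz)^q dy)^{1/q} (essential supremum over y ≥ x of w(y)∫₀ʸ k(y,z)f(z)dz when q = ∞), set U(t) := ess sup_{0≤x≤t} u(x), and (H_t f)(x) := χ_{[t,∞)}(x)∫₀ˣ k(x,z)f(z)dz. Then the least constant C_T such that ‖Tf‖_{L^∞_u} ≤ C_T‖f‖_{L^p_v} for all f ∈ 𝔐⁺ equals sup_{t≥0} U(t)‖H_t‖_{L^p_v→L^q_w}. -/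
/-!
`T f` is antitone, and at `t ≥ 0` its value is the `L^q_w` norm of `H_t f`. Pairing with an
antitone function in weighted `L^∞` does not see the difference between `u` and its running
essential supremum `U`, so `‖T f‖_{L^∞_u} = ⨆ t, U t * ‖H_t f‖_{L^q_w}` for every `f`. Since the
least constant of an inequality commutes with suprema and scalar factors on the left-hand side, the
identity passes to best constants.
-/

open MeasureTheory Set ENNReal

noncomputable section

/-- The operator `T` with exponent `q ∈ (0,∞]`. -/
def opTg (q : ℝ≥0∞) (w : ℝ → ℝ≥0∞) (k : ℝ → ℝ → ℝ≥0∞) (f : ℝ → ℝ≥0∞) (x : ℝ) : ℝ≥0∞ :=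
  if q = ∞ then
    essSup (fun y => w y * intTo y (fun z => k y z * f z)) (volume.restrict (Ici x))
  else
    (∫⁻ y in Ioi x, w y * (intTo y (fun z => k y z * f z)) ^ q.toReal) ^ (1/q.toReal)

/-- `(H_t f)(x) = χ_{[t,∞)}(x) ∫₀ˣ k(x,z) f(z) dz`. -/
def Ht (k : ℝ → ℝ → ℝ≥0∞) (t : ℝ) (f : ℝ → ℝ≥0∞) (x : ℝ) : ℝ≥0∞ :=
  if t ≤ x then intTo x (fun z => k x z * f z) else 0

/-- `U(t) = ess sup_{0 ≤ x ≤ t} u(x)`. -/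
def Ubar (u : ℝ → ℝ≥0∞) (t : ℝ) : ℝ≥0∞ :=
  essSup u (volume.restrict (Icc (0:ℝ) t))

section EssSup

variable {α : Type*} [LinearOrder α] [TopologicalSpace α] [OrderClosedTopology α]
  [SecondCountableTopology α] [MeasurableSpace α]

theorem measure_eq_zero_of_forall_measure_inter_Iic_eq_zero {μ : Measure α} {s : Set α}
    (h : ∀ y ∈ s, μ (s ∩ Iic y) = 0) : μ s = 0 := by
  refine measure_null_of_locally_null s fun x hx => ?_
  by_cases hmax : ∃ y ∈ s, x < y
  · obtain ⟨y, hy, hxy⟩ := hmax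
    exact ⟨s ∩ Iic y, Filter.inter_mem self_mem_nhdsWithin
      (mem_nhdsWithin_of_mem_nhds (Iic_mem_nhds hxy)), h y hy⟩
  · push Not at hmax
    exact ⟨s, self_mem_nhdsWithin, (inter_eq_left.2 hmax) ▸ h x hx⟩

variable [OpensMeasurableSpace α]

theorem ae_le_essSup_restrict_Iic {β : Type*} [CompleteLinearOrder β] [DenselyOrdered β]
    [TopologicalSpace β] [OrderTopology β] [SecondCountableTopology β] (μ : Measure α) (u : α → β) :
    ∀ᵐ x ∂μ, u x ≤ essSup u (μ.restrict (Iic x)) := by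
  -- The running essential supremum is increasing, so the exceptional set at a fixed level `c` is
  -- null below each of its points; a countable dense set of levels detects every failure.
  have le_of_essSup_le (c : β) :
      ∀ᵐ x ∂μ, essSup u (μ.restrict (Iic x)) ≤ c → u x ≤ c := by
    refine ae_iff.2 (measure_eq_zero_of_forall_measure_inter_Iic_eq_zero fun y hy => ?_)
    rw [← Measure.restrict_apply' measurableSet_Iic]
    have hyc : essSup u (μ.restrict (Iic y)) ≤ c := (Classical.not_imp.1 hy).1
    have hu : ∀ᵐ x ∂μ.restrict (Iic y), u x ≤ c := by
      filter_upwards [_root_.ae_le_essSup (f := u) (μ := μ.restrict (Iic y))] with x hx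
      exact hx.trans hyc
    exact ae_iff.1 (hu.mono fun x hx _ => hx)
  obtain ⟨s, hs_countable, hs_dense⟩ := TopologicalSpace.exists_countable_dense β
  filter_upwards [(ae_ball_iff hs_countable).2 fun c _ => le_of_essSup_le c] with x hx
  by_contra! hlt
  obtain ⟨c, hcs, hc, hcu⟩ := hs_dense.exists_between hlt
  exact (hx c hcs hc.le).not_gt hcu

theorem essSup_mul_antitone (μ : Measure α) (u : α → ℝ≥0∞) {G : α → ℝ≥0∞} (hG : Antitone G) :
    essSup (fun x => u x * G x) μ = ⨆ t, essSup u (μ.restrict (Iic t)) * G t := by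
  refine le_antisymm (essSup_le_of_ae_le _ ?_) (iSup_le fun t => ?_)
  · filter_upwards [ae_le_essSup_restrict_Iic μ u] with x hx
    exact le_iSup_of_le x (by gcongr)
  · calc essSup u (μ.restrict (Iic t)) * G t
        = essSup (fun x => G t * u x) (μ.restrict (Iic t)) := by
          rw [ENNReal.essSup_const_mul, mul_comm]
      _ ≤ essSup (fun x => u x * G x) (μ.restrict (Iic t)) := by
          refine essSup_mono_ae ?_
          filter_upwards [ae_restrict_mem measurableSet_Iic] with x hx
          rw [mul_comm]
          gcongr
          exact hG hx
      _ ≤ essSup (fun x => u x * G x) μ := essSup_mono_measure' Measure.restrict_le_self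

end EssSup

theorem linfN_antitone (u : ℝ → ℝ≥0∞) {G : ℝ → ℝ≥0∞} (hG : Antitone G) :
    linfN u G = ⨆ (t : ℝ) (_ : 0 ≤ t), Ubar u t * G t := by
  have restrict_Iic (t : ℝ) : (volume.restrict (Ioi (0 : ℝ))).restrict (Iic t) =
      volume.restrict (Icc 0 t) := by
    rw [Measure.restrict_restrict measurableSet_Iic, Iic_inter_Ioi, restrict_Ioc_eq_restrict_Icc]
  rw [linfN, essSup_mul_antitone _ u hG]
  refine iSup_congr fun t => ?_
  rw [restrict_Iic]
  by_cases ht : 0 ≤ t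
  · simp only [ht, iSup_pos, Ubar]
  · simp [ht]

section LeastConstant

variable {ι : Sort*} (Ψ : (ℝ → ℝ≥0∞) → ℝ≥0∞)

-- Functions with `Ψ f = ∞` must be excluded: since `0 * ∞ = 0`, they can keep the infimum defining
-- `leastC` from being attained at `0`.
theorem leastC_le_iff {Φ : (ℝ → ℝ≥0∞) → ℝ≥0∞} {C : ℝ≥0∞} (hC : C ≠ ∞) :
    leastC Φ Ψ ≤ C ↔ ∀ f, Measurable f → Ψ f ≠ ∞ → Φ f ≤ C * Ψ f := by
  refine ⟨fun h f hf hΨ => ?_, fun h => le_of_forall_gt_imp_ge_of_dense fun D hD => ?_⟩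
  · obtain ⟨D₀, hD₀, -⟩ := sInf_lt_iff.1 (h.trans_lt hC.lt_top)
    by_cases hΨ₀ : Ψ f = 0
    · simpa only [hΨ₀, mul_zero] using hD₀ f hf
    · rw [← ENNReal.div_le_iff hΨ₀ hΨ]
      refine le_trans (le_sInf fun D hD => ?_) h
      exact (ENNReal.div_le_iff hΨ₀ hΨ).2 (hD f hf)
  · refine sInf_le fun f hf => ?_
    by_cases hΨ : Ψ f = ∞
    · simp only [hΨ, ENNReal.mul_top (pos_of_gt hD).ne', le_top]
    · exact (h f hf hΨ).trans (by gcongr)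

theorem leastC_iSup (Φ : ι → (ℝ → ℝ≥0∞) → ℝ≥0∞) :
    leastC (fun f => ⨆ i, Φ i f) Ψ = ⨆ i, leastC (Φ i) Ψ := by
  refine eq_of_forall_ge_iff fun C => ?_
  by_cases hC : C = ∞
  · simp only [hC, le_top]
  · simp only [leastC_le_iff Ψ hC, iSup_le_iff]
    exact ⟨fun h i f hf hΨ => h f hf hΨ i, fun h f hf hΨ i => h i f hf hΨ⟩

theorem leastC_const_mul (c : ℝ≥0∞) (Φ : (ℝ → ℝ≥0∞) → ℝ≥0∞) :
    leastC (fun f => c * Φ f) Ψ = c * leastC Φ Ψ := by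
  refine eq_of_forall_ge_iff fun C => ?_
  by_cases hC : C = ∞
  · simp only [hC, le_top]
  by_cases hc : c = 0
  · simp [hc, leastC_le_iff Ψ hC]
  -- A finite right-hand side makes division by `c` legitimate even for `c = ∞`.
  have mul_le_iff {a b : ℝ≥0∞} (hb : b ≠ ∞) : c * a ≤ b ↔ a ≤ b / c := by
    rw [mul_comm, ENNReal.le_div_iff_mul_le (Or.inl hc) (Or.inr hb)]
  rw [mul_le_iff hC, leastC_le_iff Ψ hC, leastC_le_iff Ψ (ENNReal.div_ne_top hC hc)]
  refine forall₃_congr fun f _ hΨ => ?_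
  rw [mul_le_iff (ENNReal.mul_ne_top hC hΨ), ENNReal.mul_div_right_comm]

end LeastConstant

theorem restrict_Ioi_restrict_Ici {α : Type*} [LinearOrder α] [TopologicalSpace α]
    [OrderClosedTopology α] [MeasurableSpace α] [OpensMeasurableSpace α] (μ : Measure α)
    [NullSingletonClass μ] {a t : α} (h : a ≤ t) :
    (μ.restrict (Ioi a)).restrict (Ici t) = μ.restrict (Ioi t) := by
  rw [← restrict_Ioi_eq_restrict_Ici, Measure.restrict_restrict measurableSet_Ioi,
    inter_eq_left.2 (Ioi_subset_Ioi h)]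

theorem Ht_eq_indicator (k : ℝ → ℝ → ℝ≥0∞) (t : ℝ) (f : ℝ → ℝ≥0∞) :
    Ht k t f = (Ici t).indicator fun x => intTo x fun z => k x z * f z := rfl

section Indicator

variable (w g : ℝ → ℝ≥0∞) {t : ℝ}

theorem linfN_indicator_Ici (ht : 0 ≤ t) :
    linfN w ((Ici t).indicator g) = essSup (fun x => w x * g x) (volume.restrict (Ici t)) := by
  simp only [linfN, ← indicator_mul_right]
  rw [ENNReal.essSup_indicator_eq_essSup_restrict measurableSet_Ici,
    restrict_Ioi_restrict_Ici volume ht, restrict_Ioi_eq_restrict_Ici]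

theorem lpN_indicator_Ici {p : ℝ} (hp : 0 < p) (ht : 0 ≤ t) :
    lpN p w ((Ici t).indicator g) = (∫⁻ x in Ioi t, w x * g x ^ p) ^ (1 / p) := by
  have rpow_mul_indicator (x : ℝ) : (Ici t).indicator g x ^ p * w x =
      (Ici t).indicator (fun x => w x * g x ^ p) x := by
    by_cases hx : x ∈ Ici t
    · simp only [indicator_of_mem hx, mul_comm]
    · simp only [indicator_of_notMem hx, ENNReal.zero_rpow_of_pos hp, zero_mul]
  simp only [lpN, rpow_mul_indicator]
  rw [lintegral_indicator measurableSet_Ici, restrict_Ioi_restrict_Ici volume ht]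

end Indicator

section Operator

variable (w : ℝ → ℝ≥0∞) (k : ℝ → ℝ → ℝ≥0∞) (f : ℝ → ℝ≥0∞)

theorem opTg_eq_lgenN_Ht {q : ℝ≥0∞} (hq : 0 < q) {t : ℝ} (ht : 0 ≤ t) :
    opTg q w k f t = lgenN q w (Ht k t f) := by
  unfold opTg lgenN
  split_ifs with hq_top
  · rw [Ht_eq_indicator, linfN_indicator_Ici _ _ ht]
  · rw [Ht_eq_indicator, lpN_indicator_Ici _ _ (ENNReal.toReal_pos hq.ne' hq_top) ht]

theorem opTg_antitone (q : ℝ≥0∞) : Antitone (opTg q w k f) := by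
  intro x y hxy
  unfold opTg
  split_ifs
  · exact essSup_mono_measure' (Measure.restrict_mono_set _ (Ici_subset_Ici.2 hxy))
  · gcongr

theorem linfN_opTg {q : ℝ≥0∞} (hq : 0 < q) (u : ℝ → ℝ≥0∞) :
    linfN u (opTg q w k f) = ⨆ (t : ℝ) (_ : 0 ≤ t), Ubar u t * lgenN q w (Ht k t f) := by
  rw [linfN_antitone u (opTg_antitone w k f q)]
  exact biSup_congr fun t ht => by rw [opTg_eq_lgenN_Ht w k f hq ht]

end Operator

theorem statement10_general (q : ℝ≥0∞) (hq : 0 < q) (u w : ℝ → ℝ≥0∞) (k : ℝ → ℝ → ℝ≥0∞)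
    (Ψ : (ℝ → ℝ≥0∞) → ℝ≥0∞) :
    leastC (fun f => linfN u (opTg q w k f)) Ψ
      = ⨆ (t : ℝ) (_ : 0 ≤ t), Ubar u t * leastC (fun f => lgenN q w (Ht k t f)) Ψ := by
  simp only [linfN_opTg w k _ hq u, leastC_iSup, leastC_const_mul]

theorem statement10 (p : ℝ) (q : ℝ≥0∞) (hp : 1 ≤ p) (hq : 0 < q)
    (u v w : ℝ → ℝ≥0∞) (k : ℝ → ℝ → ℝ≥0∞)
    (hu : Measurable u) (hv : Measurable v) (hw : Measurable w)
    (hk : Measurable (Function.uncurry k))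
    (hk0 : ∀ x y : ℝ, x < y → k x y = 0) :
    leastC (fun f => linfN u (opTg q w k f)) (lpN p v)
      = ⨆ (t : ℝ) (_ : 0 ≤ t),
          Ubar u t * leastC (fun f => lgenN q w (Ht k t f)) (lpN p v) :=
  statement10_general q hq u w k (lpN p v)

end
end
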